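/- arXiv:2009.14077 — 3 statements merged into one kernel-verified Lean document; each statement's English description precedes it below -/
import Mathlib

section
/- For each integer k ≥ 0 and every ζ ≠ 1, writing ζ' = (ζ+3)/(ζ−1), the polynomial H_{2k} satisfies: H_{2k}(w₁,…,w_{2k}) evaluated with parameter ζ' equals (2/(ζ−1))^{k(k−1)} · H_{2k}(2w₁/(ζ−1), …, 2w_{2k}/(ζ−1)), the latter evaluated with parameter ζ. -/
noncomputable section

open Complex
open scoped BigOperators

/-- Jacobi theta function `ϑ₁(z|τ)` with nome `p = e^{iπτ}` (Whittaker–Watson convention). -/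
def th1 (z τ : ℂ) : ℂ :=
  -Complex.I * ∑' n : ℤ, (-1 : ℂ) ^ n *
    Complex.exp ((Real.pi : ℂ) * Complex.I * τ * ((n : ℂ) + 1/2) ^ 2 + (2 * (n : ℂ) + 1) * Complex.I * z)

/-- Jacobi theta function `ϑ₂(z|τ)`. -/
def th2 (z τ : ℂ) : ℂ :=
  ∑' n : ℤ,
    Complex.exp ((Real.pi : ℂ) * Complex.I * τ * ((n : ℂ) + 1/2) ^ 2 + (2 * (n : ℂ) + 1) * Complex.I * z)

/-- Jacobi theta function `ϑ₃(z|τ)`. -/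
def th3 (z τ : ℂ) : ℂ :=
  ∑' n : ℤ, Complex.exp ((Real.pi : ℂ) * Complex.I * τ * (n : ℂ) ^ 2 + 2 * (n : ℂ) * Complex.I * z)

/-- Jacobi theta function `ϑ₄(z|τ)`. -/
def th4 (z τ : ℂ) : ℂ :=
  ∑' n : ℤ, (-1 : ℂ) ^ n *
    Complex.exp ((Real.pi : ℂ) * Complex.I * τ * (n : ℂ) ^ 2 + 2 * (n : ℂ) * Complex.I * z)

/-- The crossing parameter `η = π/3`. -/
def ηc : ℂ := (Real.pi : ℂ) / 3

/-- The elliptic nome `p = e^{iπτ}`. -/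
def pnome (τ : ℂ) : ℂ := Complex.exp ((Real.pi : ℂ) * Complex.I * τ)

/-- `ζ = (ϑ₁(η,p²)/ϑ₄(η,p²))²`. -/
def zet (τ : ℂ) : ℂ := (th1 ηc (2 * τ) / th4 ηc (2 * τ)) ^ 2

/-- The nome `p` is real with `0 < p < 1`. -/
def preal (τ : ℂ) : Prop := (pnome τ).im = 0 ∧ 0 < (pnome τ).re ∧ (pnome τ).re < 1

/-- A tuple given by a list of prescribed entries, padded by zeros. -/
def padded {n : ℕ} (l : List ℂ) : Fin n → ℂ := fun j => l.getD (j : ℕ) 0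

/-- Extension of a tuple by a list of prescribed further entries (padded by zeros). -/
def extL {m n : ℕ} (w : Fin m → ℂ) (l : List ℂ) : Fin n → ℂ :=
  fun j => if h : (j : ℕ) < m then w ⟨j, h⟩ else l.getD ((j : ℕ) - m) 0

/-- First `k` entries of a `2k`-tuple. -/
def firstHalf {k : ℕ} (x : Fin (2 * k) → ℂ) : Fin k → ℂ :=
  fun i => x ⟨(i : ℕ), by have := i.2; omega⟩

/-- Last `k` entries of a `2k`-tuple. -/
def secondHalf {k : ℕ} (x : Fin (2 * k) → ℂ) : Fin k → ℂ :=
  fun i => x ⟨k + (i : ℕ), by have := i.2; omega⟩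

/-- `𝕙(x,y) = ϑ₁(x−y+η)ϑ₁(x−y−η)ϑ₁(x+y+η)ϑ₁(x+y−η)`. -/
def hh (τ x y : ℂ) : ℂ :=
  th1 (x - y + ηc) τ * th1 (x - y - ηc) τ * th1 (x + y + ηc) τ * th1 (x + y - ηc) τ

/-- `𝔻(x₁,…,x_k) = ∏_{i<j} ϑ₁(x_j−x_i)ϑ₁(x_j+x_i)`. -/
def vdTheta (τ : ℂ) {k : ℕ} (y : Fin k → ℂ) : ℂ :=
  ∏ i : Fin k, ∏ j : Fin k, if i < j then th1 (y j - y i) τ * th1 (y j + y i) τ else 1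

/-- The elliptic Tsuchiya determinant `ℍ_{2k}(x₁,…,x_k; x_{k+1},…,x_{2k})`. -/
def tsuchiya (τ : ℂ) (k : ℕ) (x : Fin (2 * k) → ℂ) : ℂ :=
  (∏ i : Fin k, ∏ j : Fin k, hh τ (firstHalf x i) (secondHalf x j))
    / (vdTheta τ (firstHalf x) * vdTheta τ (secondHalf x))
    * Matrix.det (Matrix.of fun i j : Fin k => (hh τ (firstHalf x i) (secondHalf x j))⁻¹)

/-- The expression defining the elliptic Tsuchiya determinant is well defined:
the Vandermonde-type denominators and the entries `𝕙(x_i,x_{j+k})` are nonzero. -/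
def tsuDefined (τ : ℂ) (k : ℕ) (x : Fin (2 * k) → ℂ) : Prop :=
  (∀ i j : Fin k, i ≠ j →
    th1 (firstHalf x j - firstHalf x i) τ ≠ 0 ∧ th1 (firstHalf x j + firstHalf x i) τ ≠ 0) ∧
  (∀ i j : Fin k, i ≠ j →
    th1 (secondHalf x j - secondHalf x i) τ ≠ 0 ∧ th1 (secondHalf x j + secondHalf x i) τ ≠ 0) ∧
  (∀ i j : Fin k, hh τ (firstHalf x i) (secondHalf x j) ≠ 0)

/-- `h(w,w') = 1 − (3+ζ²)ww' + (1−ζ²)ww'(w+w')`. -/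
def hpol (ζ w w' : ℂ) : ℂ := 1 - (3 + ζ ^ 2) * w * w' + (1 - ζ ^ 2) * w * w' * (w + w')

/-- Vandermonde product `Δ(w₁,…,w_k) = ∏_{i<j}(w_j − w_i)`. -/
def vdm {k : ℕ} (y : Fin k → ℂ) : ℂ :=
  ∏ i : Fin k, ∏ j : Fin k, if i < j then y j - y i else 1

/-- The determinant-ratio expression defining the polynomial `H_{2k}`. -/
def Hratio (ζ : ℂ) (k : ℕ) (w : Fin (2 * k) → ℂ) : ℂ :=
  (∏ i : Fin k, ∏ j : Fin k, hpol ζ (firstHalf w i) (secondHalf w j))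
    / (vdm (firstHalf w) * vdm (secondHalf w))
    * Matrix.det (Matrix.of fun i j : Fin k => (hpol ζ (firstHalf w i) (secondHalf w j))⁻¹)

/-- The expression `Hratio` is well defined at `w`. -/
def HratioDefined (ζ : ℂ) (k : ℕ) (w : Fin (2 * k) → ℂ) : Prop :=
  (∀ i j : Fin k, i ≠ j → firstHalf w i ≠ firstHalf w j) ∧
  (∀ i j : Fin k, i ≠ j → secondHalf w i ≠ secondHalf w j) ∧
  (∀ i j : Fin k, hpol ζ (firstHalf w i) (secondHalf w j) ≠ 0)

/-- `H` is the family of Rosengren–Zinn-Justin polynomials `H_{2k}` for parameter `ζ`: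
for each `k`, `H k` is a polynomial function of the `2k` variables agreeing with the
determinant-ratio formula wherever the latter is defined, and `H 0 = 1`. -/
def IsHFamily (ζ : ℂ) (H : (k : ℕ) → (Fin (2 * k) → ℂ) → ℂ) : Prop :=
  (∀ w, H 0 w = 1) ∧
  (∀ k : ℕ, ∃ P : MvPolynomial (Fin (2 * k)) ℂ, ∀ w, H k w = MvPolynomial.eval w P) ∧
  (∀ (k : ℕ) (w : Fin (2 * k) → ℂ), HratioDefined ζ k w → H k w = Hratio ζ k w)

/-- Vertex weight `a(u)`. -/
def av (τ u : ℂ) : ℂ := th4 (2*ηc) (2*τ) * th1 (u + 2*ηc) (2*τ) * th4 u (2*τ)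
/-- Vertex weight `b(u)`. -/
def bv (τ u : ℂ) : ℂ := th4 (2*ηc) (2*τ) * th4 (u + 2*ηc) (2*τ) * th1 u (2*τ)
/-- Vertex weight `c(u)`. -/
def cv (τ u : ℂ) : ℂ := th1 (2*ηc) (2*τ) * th4 (u + 2*ηc) (2*τ) * th4 u (2*τ)
/-- Vertex weight `d(u)`. -/
def dv (τ u : ℂ) : ℂ := th1 (2*ηc) (2*τ) * th1 (u + 2*ηc) (2*τ) * th1 u (2*τ)
/-- `r(u) = a(u) + b(u)`. -/
def rv (τ u : ℂ) : ℂ := av τ u + bv τ u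

/-- Entries of the `R`-matrix of the eight-vertex model, in the basis `{↑↑,↑↓,↓↑,↓↓}`
identified with `Fin 2 × Fin 2` (`↑ = 0`, `↓ = 1`). -/
def Rent (τ u : ℂ) (p q : Fin 2 × Fin 2) : ℂ :=
  if p = q then (if p.1 = p.2 then av τ u else bv τ u)
  else if q = (p.2, p.1) then cv τ u
  else if p.1 = p.2 ∧ q.1 = q.2 then dv τ u
  else 0

/-- Entries of `Ř(u) = 𝒫 R(u)`. -/
def Rcheckent (τ u : ℂ) (p q : Fin 2 × Fin 2) : ℂ := Rent τ u (p.2, p.1) q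

/-- The boundary vector `χ(x) ∈ ℂ²⊗ℂ²`. -/
def chiV (τ lam x : ℂ) : Fin 2 × Fin 2 → ℂ := fun p =>
  if p = ((0 : Fin 2), (1 : Fin 2)) then th1 (x + lam) (2*τ) * th4 (x - lam - 2*ηc) (2*τ)
  else if p = ((1 : Fin 2), (0 : Fin 2)) then th1 (x - lam - 2*ηc) (2*τ) * th4 (x + lam) (2*τ)
  else 0

/-- The boundary vector `χ̄(x) ∈ ℂ²⊗ℂ²`. -/
def chibarV (τ lam x : ℂ) : Fin 2 × Fin 2 → ℂ := fun p =>
  if p = ((0 : Fin 2), (0 : Fin 2)) then th1 (x + lam) (2*τ) * th1 (x - lam - 2*ηc) (2*τ)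
  else if p = ((1 : Fin 2), (1 : Fin 2)) then th4 (x - lam - 2*ηc) (2*τ) * th4 (x + lam) (2*τ)
  else 0

/-- A family `Ψ_n(u₁,…,u_{2n+1}) ∈ (ℂ²)^{⊗(2n+1)}`, represented by its components
with respect to spin configurations `α : Fin (2n+1) → Fin 2` (`↑ = 0`, `↓ = 1`). -/
abbrev PsiFam := (n : ℕ) → (Fin (2 * n + 1) → ℂ) → (Fin (2 * n + 1) → Fin 2) → ℂ

/-- The action of `Ř(u)` on tensor factors `i`, `j` of `(ℂ²)^{⊗L}`. -/
def applyRc (τ u : ℂ) {L : ℕ} (i j : Fin L) (ψ : (Fin L → Fin 2) → ℂ) :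
    (Fin L → Fin 2) → ℂ := fun α =>
  ∑ s : Fin 2, ∑ t : Fin 2,
    Rcheckent τ u (α i, α j) (s, t) * ψ (Function.update (Function.update α i s) j t)

/-- Spin flip. -/
def flipS : Fin 2 → Fin 2 := fun s => if s = 0 then 1 else 0

/-- Components of the singlet `s = ↑↓ − ↓↑`. -/
def singletC : Fin 2 → Fin 2 → ℂ := fun s t =>
  if s = 0 ∧ t = 1 then 1 else if s = 1 ∧ t = 0 then -1 else 0

/-- Delete the entries at positions `i`, `i+1` from a tuple. -/
def delTwo {α : Type*} {n : ℕ} (i : ℕ) (u : Fin (2 * (n + 1) + 1) → α) : Fin (2 * n + 1) → α :=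
  fun j => if _h : (j : ℕ) < i then u ⟨j, by have := j.2; omega⟩
           else u ⟨(j : ℕ) + 2, by have := j.2; omega⟩

/-- The components of `Ψ_n` are entire functions of each `u_i`. -/
def PsiEntire (Ψ : PsiFam) : Prop :=
  ∀ (n : ℕ) (u : Fin (2*n+1) → ℂ) (i : Fin (2*n+1)) (α : Fin (2*n+1) → Fin 2),
    Differentiable ℂ fun z => Ψ n (Function.update u i z) α

/-- (P1): the exchange relations. -/
def PsiP1 (τ : ℂ) (Ψ : PsiFam) : Prop :=
  ∀ (n : ℕ) (u : Fin (2*n+1) → ℂ) (i j : Fin (2*n+1)), (j : ℕ) = (i : ℕ) + 1 →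
    applyRc τ (u j - u i) i j (Ψ n u)
      = fun α => rv τ (u j - u i) * Ψ n (fun l => u (Equiv.swap i j l)) α

/-- (P2): local spin flips. -/
def PsiP2 (τ : ℂ) (Ψ : PsiFam) : Prop :=
  ∀ (n : ℕ) (u : Fin (2*n+1) → ℂ) (i : Fin (2*n+1)) (α : Fin (2*n+1) → Fin 2),
    Ψ n u (Function.update α i (flipS (α i)))
      = (-(pnome τ)) ^ n * Complex.exp (-Complex.I * ∑ j, (u j - u i))
        * Ψ n (Function.update u i (u i + Real.pi * τ)) α

/-- (P3): quasi-periodicity of `Ψ_n` in each `u_i`. -/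
def PsiP3 (τ : ℂ) (Ψ : PsiFam) : Prop :=
  ∀ (n : ℕ) (u : Fin (2*n+1) → ℂ) (i : Fin (2*n+1)),
    (Ψ n (Function.update u i (u i + Real.pi))
      = fun α => (∏ j ∈ Finset.univ.erase i, (if α j = 0 then (1:ℂ) else -1)) * Ψ n u α) ∧
    (Ψ n (Function.update u i (u i + 2 * Real.pi * τ))
      = fun α => (pnome τ ^ (4*n))⁻¹ *
          Complex.exp (-2 * Complex.I * ∑ j, (u i - u j)) * Ψ n u α)

/-- (P4): the wheel condition. -/
def PsiP4 (Ψ : PsiFam) : Prop :=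
  ∀ (n : ℕ) (u : Fin (2*n+1) → ℂ),
    (∃ i j k : Fin (2*n+1), i < j ∧ j < k ∧ u j = u i + 2*ηc ∧ u k = u i + 4*ηc) →
    Ψ n u = 0

/-- (P5): the reduction relations. -/
def PsiP5 (τ : ℂ) (Ψ : PsiFam) : Prop :=
  ∀ (n : ℕ) (u : Fin (2*(n+1)+1) → ℂ) (i : ℕ) (hi : i + 1 < 2*(n+1)+1),
    u ⟨i+1, hi⟩ = u ⟨i, by omega⟩ + 2*ηc →
    Ψ (n+1) u = fun α =>
      (∏ j ∈ (Finset.univ.erase (⟨i, by omega⟩ : Fin (2*(n+1)+1))).erase ⟨i+1, hi⟩,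
          th1 (u ⟨i, by omega⟩ - u j - 2*ηc) τ)
        * singletC (α ⟨i, by omega⟩) (α ⟨i+1, hi⟩)
        * Ψ n (delTwo i u) (delTwo i α)

/-- (P6): `Ψ₀ = ↑ + ↓`. -/
def PsiP6 (Ψ : PsiFam) : Prop := ∀ u α, Ψ 0 u α = 1

/-- The inhomogeneity parameters `(x₁,−x₁,…,x_n,−x_n,0)`. -/
def interleave {n : ℕ} (x : Fin n → ℂ) : Fin (2*n+1) → ℂ := fun j =>
  if h : (j : ℕ) < 2*n then
    (if (j : ℕ) % 2 = 0 then x ⟨(j:ℕ)/2, by omega⟩ else -x ⟨(j:ℕ)/2, by omega⟩)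
  else 0

/-- Components of `χ(x)`. -/
def chiC (τ lam x : ℂ) (s t : Fin 2) : ℂ :=
  if s = 0 ∧ t = 1 then th1 (x + lam) (2*τ) * th4 (x - lam - 2*ηc) (2*τ)
  else if s = 1 ∧ t = 0 then th1 (x - lam - 2*ηc) (2*τ) * th4 (x + lam) (2*τ)
  else 0

/-- Components of `χ̄(x)`. -/
def chibarC (τ lam x : ℂ) (s t : Fin 2) : ℂ :=
  if s = 0 ∧ t = 0 then th1 (x + lam) (2*τ) * th1 (x - lam - 2*ηc) (2*τ)
  else if s = 1 ∧ t = 1 then th4 (x - lam - 2*ηc) (2*τ) * th4 (x + lam) (2*τ)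
  else 0

/-- The scalar product `Z_n(x₁,…,x_n) = ⟨ξ_n(x₁,…,x_n), Ψ_n(x₁,−x₁,…,x_n,−x_n,0)⟩`. -/
def Zfun (τ lam : ℂ) (Ψ : PsiFam) (n : ℕ) (x : Fin n → ℂ) : ℂ :=
  ∑ α : Fin (2*n+1) → Fin 2,
    (∏ m : Fin n, chiC τ lam (x m)
        (α ⟨2*(m:ℕ), by have := m.2; omega⟩) (α ⟨2*(m:ℕ)+1, by have := m.2; omega⟩))
      * (if α ⟨2*n, by omega⟩ = 0 then (1:ℂ) else 0)
      * Ψ n (interleave x) α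

/-- The scalar product `Z̄_n^±(x₁,…,x_n)`, with `ε = ±1`. -/
def Zbarfun (τ lam ε : ℂ) (Ψ : PsiFam) (n : ℕ) (x : Fin n → ℂ) : ℂ :=
  ∑ α : Fin (2*n+1) → Fin 2,
    (∏ m : Fin n, chibarC τ lam (x m)
        (α ⟨2*(m:ℕ), by have := m.2; omega⟩) (α ⟨2*(m:ℕ)+1, by have := m.2; omega⟩))
      * (if α ⟨2*n, by omega⟩ = 0 then (1:ℂ) else ε)
      * Ψ n (interleave x) α

/-- The normalisation constant `𝒩_n`. -/
def Ncoef (τ : ℂ) (n : ℕ) : ℂ :=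
  (-1 : ℂ) ^ ((n+1)/2) * (th1 ηc τ ^ (n^2))⁻¹ * (th4 0 (2*τ) / th4 ηc (2*τ)) ^ (n*(n+1)/2)

/-- The vector `ψ_n = 𝒩_n Ψ_n(0,…,0)`. -/
def psiH (τ : ℂ) (Ψ : PsiFam) (n : ℕ) (α : Fin (2*n+1) → Fin 2) : ℂ :=
  Ncoef τ n * Ψ n (fun _ => 0) α

/-- The scalar product `S_n(μ) = ((⟨↑↓| + μ⟨↓↑|)^{⊗n} ⊗ ⟨↑|) ψ_n`. -/
def Sfun (τ : ℂ) (Ψ : PsiFam) (n : ℕ) (μ : ℂ) : ℂ :=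
  ∑ α : Fin (2*n+1) → Fin 2,
    (∏ m : Fin n,
      (if α ⟨2*(m:ℕ), by have := m.2; omega⟩ = 0 ∧ α ⟨2*(m:ℕ)+1, by have := m.2; omega⟩ = 1
        then (1:ℂ)
       else if α ⟨2*(m:ℕ), by have := m.2; omega⟩ = 1 ∧ α ⟨2*(m:ℕ)+1, by have := m.2; omega⟩ = 0
        then μ
       else 0))
      * (if α ⟨2*n, by omega⟩ = 0 then (1:ℂ) else 0) * psiH τ Ψ n α

/-- The scalar product `S̄_n^±(ν) = ((⟨↑↑| + ν⟨↓↓|)^{⊗n} ⊗ (⟨↑| ± ⟨↓|)) ψ_n`, with `ε = ±1`. -/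
def Sbarfun (τ ε : ℂ) (Ψ : PsiFam) (n : ℕ) (ν : ℂ) : ℂ :=
  ∑ α : Fin (2*n+1) → Fin 2,
    (∏ m : Fin n,
      (if α ⟨2*(m:ℕ), by have := m.2; omega⟩ = 0 ∧ α ⟨2*(m:ℕ)+1, by have := m.2; omega⟩ = 0
        then (1:ℂ)
       else if α ⟨2*(m:ℕ), by have := m.2; omega⟩ = 1 ∧ α ⟨2*(m:ℕ)+1, by have := m.2; omega⟩ = 1
        then ν
       else 0))
      * (if α ⟨2*n, by omega⟩ = 0 then (1:ℂ) else ε) * psiH τ Ψ n α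

/-- The alternating spin configuration `↑↓↑↓⋯↑`. -/
def altConf {L : ℕ} : Fin L → Fin 2 := fun j => if (j : ℕ) % 2 = 0 then 0 else 1

/-- The fully polarised spin configuration `↓⋯↓`. -/
def downConf {L : ℕ} : Fin L → Fin 2 := fun _ => 1

/-- The spin configuration `↑⋯↑↓` with a single `↓` at the last site. -/
def lastDownConf {n : ℕ} : Fin (2*n+1) → Fin 2 := fun j => if (j : ℕ) = 2*n then 1 else 0

/-- `J₂ = −1/2`. -/
def J2c : ℂ := -(1/2)
/-- `J₃ = 1/(1+ζ)`. -/
def J3c (ζ : ℂ) : ℂ := 1/(1+ζ)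
/-- `J₄ = 1/(1−ζ)`. -/
def J4c (ζ : ℂ) : ℂ := 1/(1-ζ)
/-- `μ̄ = (μ−1)²/((ζ²−1)μ)`. -/
def mubar (ζ μ : ℂ) : ℂ := (μ - 1)^2 / ((ζ^2 - 1)*μ)
/-- `ν̄ = (ν−ζ)(νζ−1)/((ζ²−1)ν)`. -/
def nubar (ζ ν : ℂ) : ℂ := (ν - ζ)*(ν*ζ - 1) / ((ζ^2 - 1)*ν)

/-- The elliptic function `w(x)`. -/
def wfun (τ x : ℂ) : ℂ :=
  th4 ηc (2*τ) / th4 0 (2*τ) * th1 x τ ^ 2 / (th1 (x - ηc) τ * th1 (x + ηc) τ)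

/-- `β₂ = η + π/2`. -/
def β2c : ℂ := ηc + (Real.pi : ℂ)/2
/-- `β₃ = η + π/2 + πτ/2`. -/
def β3c (τ : ℂ) : ℂ := ηc + (Real.pi : ℂ)/2 + (Real.pi : ℂ)*τ/2
/-- `β₄ = η + πτ/2`. -/
def β4c (τ : ℂ) : ℂ := ηc + (Real.pi : ℂ)*τ/2

/-- `f` is an (even) theta function of degree `m`, nome `p = e^{iπτ}` and norm `0`
with respect to each of its variables. -/
def ThetaLike (τ : ℂ) (m : ℕ) {n : ℕ} (X : (Fin n → ℂ) → ℂ) : Prop :=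
  ∀ (x : Fin n → ℂ) (i : Fin n),
    Differentiable ℂ (fun z => X (Function.update x i z)) ∧
    (∀ z, X (Function.update x i (z + Real.pi)) = X (Function.update x i z)) ∧
    (∀ z, X (Function.update x i (z + Real.pi * τ))
        = ((-(pnome τ)) ^ m)⁻¹ * Complex.exp (-2 * Complex.I * ((m : ℂ) * z))
            * X (Function.update x i z)) ∧
    (∀ z, X (Function.update x i (-z)) = X (Function.update x i z))

/-!
With `c = 2 / (ζ - 1)`, passing from `ζ` to `ζ' = (ζ + 3) / (ζ - 1)` rescales both arguments of `h`
by `c`. The ratio for `H_{2k}` at `(ζ', w)` therefore differs from the one at `(ζ, c w)` only in its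
two Vandermonde factors, each homogeneous of degree `k (k - 1) / 2`, so the polynomial
`w ↦ c ^ (k (k - 1)) * H_{2k}(c w)` agrees with the ratio at `ζ'` wherever the latter is defined.
The ratio is defined off a hypersurface, so it determines the polynomial.
-/

section MvPolynomial

open MvPolynomial

lemma mvPolynomial_eq_of_eval_ne_zero {R σ : Type*} [CommRing R] [IsDomain R] [Infinite R]
    {P Q D : MvPolynomial σ R} (hD : D ≠ 0)
    (h : ∀ w, eval w D ≠ 0 → eval w P = eval w Q) : P = Q := by
  refine mul_right_cancel₀ hD (MvPolynomial.funext fun w => ?_)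
  by_cases hw : eval w D = 0
  · simp [hw]
  · simp [h w hw]

lemma exists_mvPolynomial_eval_ne_zero_iff_injective (R : Type*) [CommRing R] [IsDomain R]
    (n : ℕ) :
    ∃ D : MvPolynomial (Fin n) R, D ≠ 0 ∧ ∀ w, eval w D ≠ 0 ↔ Function.Injective w := by
  refine ⟨(Matrix.vandermonde X).det, Matrix.det_vandermonde_ne_zero_iff.mpr X_injective,
    fun w => ?_⟩
  have heval : eval w (Matrix.vandermonde X).det = (Matrix.vandermonde w).det := by
    simp [Matrix.det_vandermonde]
  rw [heval, Matrix.det_vandermonde_ne_zero_iff]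

lemma exists_mvPolynomial_eval_eq_smul {R σ : Type*} [CommSemiring R] (P : MvPolynomial σ R)
    (c : R) :
    ∃ Q : MvPolynomial σ R, ∀ w, eval w Q = eval (c • w) P := by
  refine ⟨bind₁ (fun i => C c * X i) P, fun w => ?_⟩
  rw [eval, eval₂Hom_bind₁]
  simp [Pi.smul_def]

lemma exists_mvPolynomial_eval_eq_hpol {σ : Type*} (ζ : ℂ) (a b : σ) :
    ∃ p : MvPolynomial σ ℂ, p ≠ 0 ∧ ∀ w, eval w p = hpol ζ (w a) (w b) := by
  let p : MvPolynomial σ ℂ :=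
    1 - C (3 + ζ ^ 2) * X a * X b + C (1 - ζ ^ 2) * X a * X b * (X a + X b)
  have heval : ∀ w, eval w p = hpol ζ (w a) (w b) := fun w => by simp [p, hpol]
  refine ⟨p, fun hp => ?_, heval⟩
  simpa [hp, hpol] using heval 0

end MvPolynomial

lemma det_vandermonde_smul {R : Type*} [CommRing R] {n : ℕ} (c : R) (v : Fin n → R) :
    (Matrix.vandermonde (c • v)).det = c ^ (n * (n - 1) / 2) * (Matrix.vandermonde v).det := by
  have hscale : Matrix.vandermonde (c • v)
      = Matrix.of fun i j : Fin n => c ^ (j : ℕ) * Matrix.vandermonde v i j := by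
    ext i j
    simp [Matrix.vandermonde_apply, mul_pow]
  rw [hscale, Matrix.det_mul_row, Finset.prod_pow_eq_pow_sum,
    Fin.sum_univ_eq_sum_range (fun j => j), Finset.sum_range_id]

lemma vdm_eq_det_vandermonde {k : ℕ} (y : Fin k → ℂ) : vdm y = (Matrix.vandermonde y).det := by
  simp [vdm, Matrix.det_vandermonde, ← Finset.prod_filter, Finset.filter_lt_eq_Ioi]

lemma vdm_smul_mul_vdm_smul {k : ℕ} (c : ℂ) (y z : Fin k → ℂ) :
    vdm (c • y) * vdm (c • z) = c ^ (k * (k - 1)) * (vdm y * vdm z) := by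
  have hexp : k * (k - 1) = k * (k - 1) / 2 + k * (k - 1) / 2 := by
    rw [← two_mul, Nat.two_mul_div_two_of_even (Nat.even_mul_pred_self k)]
  simp only [vdm_eq_det_vandermonde, det_vandermonde_smul]
  conv_rhs => rw [hexp, pow_add]
  ring

section Scaling

variable {ζ ζ' c : ℂ}

lemma hpol_moebius (hζ : ζ ≠ 1) (x y : ℂ) :
    hpol ((ζ + 3) / (ζ - 1)) x y = hpol ζ (2 / (ζ - 1) * x) (2 / (ζ - 1) * y) := by
  have h : ζ - 1 ≠ 0 := sub_ne_zero.mpr hζ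
  unfold hpol
  field_simp
  ring

lemma firstHalf_smul {k : ℕ} (c : ℂ) (w : Fin (2 * k) → ℂ) :
    firstHalf (c • w) = c • firstHalf w :=
  rfl

lemma secondHalf_smul {k : ℕ} (c : ℂ) (w : Fin (2 * k) → ℂ) :
    secondHalf (c • w) = c • secondHalf w :=
  rfl

lemma hratioDefined_smul_iff (hc : c ≠ 0) (h : ∀ x y, hpol ζ' x y = hpol ζ (c * x) (c * y))
    {k : ℕ} {w : Fin (2 * k) → ℂ} : HratioDefined ζ k (c • w) ↔ HratioDefined ζ' k w := by
  simp [HratioDefined, firstHalf_smul, secondHalf_smul, h, hc]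

lemma Hratio_eq_pow_mul_Hratio_smul (hc : c ≠ 0)
    (h : ∀ x y, hpol ζ' x y = hpol ζ (c * x) (c * y)) (k : ℕ) (w : Fin (2 * k) → ℂ) :
    Hratio ζ' k w = c ^ (k * (k - 1)) * Hratio ζ k (c • w) := by
  have hpow : c ^ (k * (k - 1)) ≠ 0 := pow_ne_zero _ hc
  simp only [Hratio, h, firstHalf_smul, secondHalf_smul, vdm_smul_mul_vdm_smul, Pi.smul_apply,
    smul_eq_mul]
  rw [← mul_assoc, ← mul_div_assoc, mul_div_mul_left _ _ hpow]

end Scaling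

lemma HratioDefined.of_injective {ζ : ℂ} {k : ℕ} {w : Fin (2 * k) → ℂ}
    (hw : Function.Injective w) (h : ∀ a b, hpol ζ (w a) (w b) ≠ 0) : HratioDefined ζ k w := by
  refine ⟨fun i j hij => hw.ne ?_, fun i j hij => hw.ne ?_, fun i j => h _ _⟩ <;>
    simpa [Fin.ext_iff] using hij

lemma exists_mvPolynomial_hratioDefined (ζ : ℂ) (k : ℕ) :
    ∃ D : MvPolynomial (Fin (2 * k)) ℂ,
      D ≠ 0 ∧ ∀ w, MvPolynomial.eval w D ≠ 0 → HratioDefined ζ k w := by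
  obtain ⟨V, hV, hV_eval⟩ := exists_mvPolynomial_eval_ne_zero_iff_injective ℂ (2 * k)
  choose p hp hp_eval using exists_mvPolynomial_eval_eq_hpol (σ := Fin (2 * k)) ζ
  refine ⟨V * ∏ a, ∏ b, p a b, mul_ne_zero hV ?_, fun w hw => ?_⟩
  · simp [Finset.prod_ne_zero_iff, hp]
  · rw [map_mul, mul_ne_zero_iff] at hw
    refine .of_injective ((hV_eval w).mp hw.1) ?_
    simpa [Finset.prod_ne_zero_iff, hp_eval] using hw.2

namespace IsHFamily

variable {ζ ζ' c : ℂ} {H H' : (k : ℕ) → (Fin (2 * k) → ℂ) → ℂ}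

lemma unique (hH : IsHFamily ζ H) (hH' : IsHFamily ζ H') : H = H' := by
  funext k w
  obtain ⟨P, hP⟩ := hH.2.1 k
  obtain ⟨Q, hQ⟩ := hH'.2.1 k
  obtain ⟨D, hD, hdef⟩ := exists_mvPolynomial_hratioDefined ζ k
  have hPQ : P = Q := mvPolynomial_eq_of_eval_ne_zero hD fun v hv => by
    rw [← hP, ← hQ, hH.2.2 k v (hdef v hv), hH'.2.2 k v (hdef v hv)]
  rw [hP, hQ, hPQ]

lemma of_hpol_eq_hpol_mul (hH : IsHFamily ζ H) (hc : c ≠ 0)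
    (h : ∀ x y, hpol ζ' x y = hpol ζ (c * x) (c * y)) :
    IsHFamily ζ' fun k w => c ^ (k * (k - 1)) * H k (c • w) := by
  refine ⟨fun w => by simp [hH.1], fun k => ?_, fun k w hw => ?_⟩
  · obtain ⟨P, hP⟩ := hH.2.1 k
    obtain ⟨Q, hQ⟩ := exists_mvPolynomial_eval_eq_smul P c
    exact ⟨.C (c ^ (k * (k - 1))) * Q, fun w => by simp [hP, hQ]⟩
  · beta_reduce
    rw [hH.2.2 k _ ((hratioDefined_smul_iff hc h).mpr hw), Hratio_eq_pow_mul_Hratio_smul hc h]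

lemma moebius (hH : IsHFamily ζ H) (hζ : ζ ≠ 1) :
    IsHFamily ((ζ + 3) / (ζ - 1))
      fun k w => (2 / (ζ - 1)) ^ (k * (k - 1)) * H k ((2 / (ζ - 1)) • w) :=
  hH.of_hpol_eq_hpol_mul (div_ne_zero two_ne_zero (sub_ne_zero.mpr hζ)) (hpol_moebius hζ)

end IsHFamily

theorem stmt6 (H : ℂ → (k : ℕ) → (Fin (2*k) → ℂ) → ℂ) (hH : ∀ ζ, IsHFamily ζ (H ζ))
    (k : ℕ) (ζ : ℂ) (hζ : ζ ≠ 1) (w : Fin (2*k) → ℂ) :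
    H ((ζ+3)/(ζ-1)) k w
      = (2/(ζ-1)) ^ (k*(k-1)) * H ζ k (fun i => 2 * w i / (ζ-1)) := by
  have hscale : (fun i => 2 * w i / (ζ - 1)) = (2 / (ζ - 1)) • w :=
    funext fun i => mul_div_right_comm 2 (w i) (ζ - 1)
  rw [(hH _).unique ((hH ζ).moebius hζ), hscale]

end
end

section
/- Let ω = e^{iπ/3} and let k ≥ 0 be an integer. Then, for all nonzero complex z₁,…,z_{2k+1}, z at which the defining determinant ratios are defined: (i) s_{Y_{4k+2}}(z₁,…,z_{2k}, z₁^{−1},…,z_{2k}^{−1}, z, 1) = z^k · ∏_{i=1}^{2k}(1 + z_i + z_i^{−1}) · χ_{Y_{2k+2}}(z₁,…,z_{2k}, z, ω) · χ_{Y_{2k}}(z₁,…,z_{2k}); and (ii) s_{Y_{4k+4}}(z₁,…,z_{2k+1}, z₁^{−1},…,z_{2k+1}^{−1}, z, 1) = z^k (1+z) · ∏_{i=1}^{2k+1}(1 + z_i + z_i^{−1}) · χ_{Y_{2k+2}}(z₁,…,z_{2k+1}, z) · χ_{Y_{2k+2}}(z₁,…,z_{2k+1}, ω). -/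
noncomputable section

open Complex
open scoped BigOperators

/-- the double-staircase partition `Y_k` -/
def YkP (k : ℕ) : Fin k → ℕ := fun i => (k - 1 - (i:ℕ)) / 2

/-- numerator of the Schur function -/
def schurNum {m : ℕ} (lam : Fin m → ℕ) (z : Fin m → ℂ) : ℂ :=
  Matrix.det (Matrix.of fun i j : Fin m => z i ^ ((lam j : ℤ) + (m:ℤ) - 1 - ((j:ℕ):ℤ)))

/-- denominator of the Schur function -/
def schurDen {m : ℕ} (z : Fin m → ℂ) : ℂ :=
  Matrix.det (Matrix.of fun i j : Fin m => z i ^ ((m:ℤ) - 1 - ((j:ℕ):ℤ)))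

/-- the Schur function `s_λ(z₁,…,z_m)` -/
def schurF {m : ℕ} (lam : Fin m → ℕ) (z : Fin m → ℂ) : ℂ := schurNum lam z / schurDen z

/-- numerator of the symplectic character -/
def symplNum {m : ℕ} (lam : Fin m → ℕ) (z : Fin m → ℂ) : ℂ :=
  Matrix.det (Matrix.of fun i j : Fin m =>
    z i ^ ((lam j : ℤ) + (m:ℤ) - ((j:ℕ):ℤ)) - z i ^ (-((lam j : ℤ) + (m:ℤ) - ((j:ℕ):ℤ))))

/-- denominator of the symplectic character -/
def symplDen {m : ℕ} (z : Fin m → ℂ) : ℂ :=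
  Matrix.det (Matrix.of fun i j : Fin m =>
    z i ^ ((m:ℤ) - ((j:ℕ):ℤ)) - z i ^ (-((m:ℤ) - ((j:ℕ):ℤ))))

/-- the symplectic character `χ_λ(z₁,…,z_m)` -/
def symplF {m : ℕ} (lam : Fin m → ℕ) (z : Fin m → ℂ) : ℂ := symplNum lam z / symplDen z

/-- the tuple `(z₁,…,z_m, z₁⁻¹,…,z_m⁻¹, a, b)` -/
def dblInv {m n : ℕ} (z : Fin m → ℂ) (a b : ℂ) : Fin n → ℂ := fun j =>
  if h : (j:ℕ) < m then z ⟨j, h⟩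
  else if h2 : (j:ℕ) < m + m then (z ⟨(j:ℕ) - m, by omega⟩)⁻¹
  else if (j:ℕ) = m + m then a else b

/-!
After the substitutions `z_i = q_i ^ 2` and `z = p ^ 2`, every determinant has entries
`x ^ b ± x ^ (-b)`, where `b` runs through the odd or the even positive integers in the
denominators, and only through those prime to `3` in the numerators. Since `Y_n` is equal to its
complement in a rectangle, adding and subtracting columns symmetric about the centre splits the
Schur determinant into a cosine determinant at `(q, 1)` and a sine determinant at `(q, p)`.

If `a_{j+1} = b_j + d`, the product formulas for hyperbolic functions say that, modulo the preceding
columns, column `a_{j+1}` is the function `x ^ d ± x ^ (-d)` times column `b_j`. A row at a zero of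
that function can therefore be removed at the cost of a product over the other rows. The relevant
zeros are `x = 1` for the minus sign, and `x ^ 2 = ω`, `d = 3` for the plus sign. The quotient of
the products for `d = 3` and `d = 1` is `∏ (1 + z_i + z_i⁻¹)`.
-/

section Determinant

variable {R ι κ : Type*} [CommRing R] [Fintype ι] [DecidableEq ι]

theorem det_submatrix_equiv_equiv [Fintype κ] [DecidableEq κ] (e f : ι ≃ κ) (M : Matrix κ κ R) :
    (M.submatrix e f).det = (Equiv.Perm.sign (f.trans e.symm) : ℤ) * M.det := by
  have hM : M.submatrix e f = (M.submatrix e e).submatrix id (f.trans e.symm) := by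
    ext
    simp
  rw [hM, Matrix.det_permute', Matrix.det_submatrix_equiv_self]

theorem det_fromBlocks_of_add_mul_eq {A B C D E : Matrix ι ι R} (h : A + E * C = B + E * D) :
    (Matrix.fromBlocks A B C D).det = (A + E * C).det * (D - C).det := by
  have hmul : Matrix.fromBlocks 1 E 0 1 * Matrix.fromBlocks A B C D *
      Matrix.fromBlocks 1 (-1) 0 1 = Matrix.fromBlocks (A + E * C) 0 C (D - C) := by
    simp [Matrix.fromBlocks_multiply, ← h, sub_eq_neg_add]
  simpa using congrArg Matrix.det hmul

end Determinant

section Alternant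

variable {X R : Type*} [CommRing R]

/-- The alternant `det (φ_j(v_i))` of the first `n` functions of a sequence `φ` at `n` points. -/
def alternant (φ : ℕ → X → R) {n : ℕ} (v : Fin n → X) : R :=
  Matrix.det (Matrix.of fun i j : Fin n => φ j (v i))

theorem alternant_eq_of_sub_mem_span {φ ψ : ℕ → X → R}
    (h : ∀ j, ψ j - φ j ∈ Submodule.span R (φ '' Set.Iio j)) {n : ℕ} (v : Fin n → X) :
    alternant ψ v = alternant φ v := by
  choose c hc hψ using fun j => (Finsupp.mem_span_image_iff_linearCombination R).1 (h j)
  have c_eq_zero {l j : ℕ} (hjl : j ≤ l) : c j l = 0 :=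
    Finsupp.notMem_support_iff.1 fun hl => hjl.not_gt (hc j hl)
  let U : Matrix (Fin n) (Fin n) R := 1 + Matrix.of fun l j : Fin n => c j l
  have det_U : U.det = 1 := by
    have hU : U.BlockTriangular id := fun l j (hjl : j < l) => by
      simp [U, Matrix.one_apply_ne hjl.ne', c_eq_zero (Fin.le_def.1 hjl.le)]
    simp [Matrix.det_of_isUpperTriangular hU, U, c_eq_zero]
  have expand (x : X) (j : Fin n) : ψ j x = φ j x + ∑ l : Fin n, φ l x * c j l := by
    have hsupp : (c j).support ⊆ Finset.range n := fun l hl =>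
      Finset.mem_range.2 ((Set.mem_Iio.1 (hc j hl)).trans j.isLt)
    have hx := congr_fun (hψ j) x
    rw [Finsupp.linearCombination_apply, Finsupp.sum_of_support_subset _ hsupp _ (by simp)] at hx
    simp only [Finset.sum_apply, Pi.smul_apply, smul_eq_mul, Pi.sub_apply] at hx
    rw [Fin.sum_univ_eq_sum_range fun l => φ l x * c j l, ← sub_eq_iff_eq_add', ← hx]
    exact Finset.sum_congr rfl fun l _ => mul_comm _ _
  calc alternant ψ v = (Matrix.of (fun i j : Fin n => φ j (v i)) * U).det := by
        rw [alternant]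
        congr 1
        ext i j
        simp [U, Matrix.mul_apply, Matrix.one_apply, mul_add, Finset.sum_add_distrib, expand]
    _ = alternant φ v := by rw [Matrix.det_mul, det_U, mul_one, alternant]

theorem alternant_mul (w : X → R) (φ : ℕ → X → R) {n : ℕ} (v : Fin n → X) :
    alternant (fun j => w * φ j) v = (∏ i, w (v i)) * alternant φ v :=
  Matrix.det_mul_column (fun i => w (v i)) (Matrix.of fun i j : Fin n => φ j (v i))

theorem alternant_snoc_of_eq_zero {φ : ℕ → X → R} {y : X} (hφ : ∀ j, φ (j + 1) y = 0)
    {m : ℕ} (z : Fin m → X) :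
    alternant φ (Fin.snoc z y : Fin (m + 1) → X) =
      (-1) ^ m * φ 0 y * alternant (fun j => φ (j + 1)) z := by
  rw [alternant, Matrix.det_succ_row _ (Fin.last m), Fin.sum_univ_succ,
    Finset.sum_eq_zero fun j _ => by simp [hφ], add_zero]
  congr 1
  · simp
  · rw [alternant]
    congr 1
    ext i j
    simp

/-- If `w` vanishes at `y`, the columns `w * ψ j` vanish there too, so that the row of `y`
keeps only its first entry. -/
theorem alternant_snoc {φ ψ : ℕ → X → R} {w : X → R} {y : X} (hw : w y = 0)
    (h : ∀ j, w * ψ j - φ (j + 1) ∈ Submodule.span R (φ '' Set.Iic j)) {m : ℕ} (z : Fin m → X) :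
    alternant φ (Fin.snoc z y : Fin (m + 1) → X) =
      (-1) ^ m * φ 0 y * ((∏ i, w (z i)) * alternant ψ z) := by
  let θ : ℕ → X → R := fun j => Nat.casesOn j (φ 0) fun j => w * ψ j
  have hθ : ∀ j, θ j - φ j ∈ Submodule.span R (φ '' Set.Iio j) := by
    rintro (_ | j)
    · simp [θ]
    · simpa only [θ, Set.Iio_add_one_eq_Iic] using h j
  calc alternant φ (Fin.snoc z y : Fin (m + 1) → X)
    _ = alternant θ (Fin.snoc z y : Fin (m + 1) → X) :=
        (alternant_eq_of_sub_mem_span hθ _).symm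
    _ = (-1) ^ m * φ 0 y * alternant (fun j => w * ψ j) z :=
        alternant_snoc_of_eq_zero (φ := θ) (fun j => by simp [θ, hw]) z
    _ = _ := by rw [alternant_mul]

end Alternant

section CoshSinhPow

variable {R : Type*} [CommRing R]

/-- `x ↦ x ^ b + x ^ (-b)`, that is `2 cosh (b log x)`. -/
def coshPow (b : ℤ) (x : Rˣ) : R := ↑(x ^ b) + ↑(x ^ (-b))

/-- `x ↦ x ^ b - x ^ (-b)`, that is `2 sinh (b log x)`. -/
def sinhPow (b : ℤ) (x : Rˣ) : R := ↑(x ^ b) - ↑(x ^ (-b))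

theorem coshPow_mul_sinhPow (d b : ℤ) :
    (coshPow d * sinhPow b : Rˣ → R) = sinhPow (b + d) + sinhPow (b - d) := by
  ext x
  simp only [coshPow, sinhPow, Pi.mul_apply, Pi.add_apply, neg_add_rev, neg_neg, sub_eq_add_neg,
    zpow_add, Units.val_mul]
  ring

theorem sinhPow_mul_sinhPow (d b : ℤ) :
    (sinhPow d * sinhPow b : Rˣ → R) = coshPow (b + d) - coshPow (b - d) := by
  ext x
  simp only [coshPow, sinhPow, Pi.mul_apply, Pi.sub_apply, neg_add_rev, neg_neg, sub_eq_add_neg,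
    zpow_add, Units.val_mul]
  ring

theorem sinhPow_three (x : Rˣ) : sinhPow 3 x = sinhPow 1 x * (1 + coshPow 2 x) := by
  have hprod : coshPow 2 x * sinhPow 1 x = sinhPow 3 x - sinhPow 1 x := by
    rw [← Pi.mul_apply, coshPow_mul_sinhPow]
    norm_num [sinhPow, sub_eq_add_neg]
  linear_combination -hprod

theorem mul_coshPow_one (x : Rˣ) : x * coshPow 1 x = 1 + (x : R) ^ 2 := by
  simp [coshPow, mul_add, sq, add_comm]

theorem coshPow_abs (b : ℤ) : (coshPow |b| : Rˣ → R) = coshPow b := by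
  ext x
  rcases abs_choice b with h | h <;> simp [coshPow, h, add_comm]

theorem coshPow_mem_span {a : ℕ → ℤ} {s : Set ℕ} {c : ℤ} (hc : |c| ∈ a '' s) :
    (coshPow c : Rˣ → R) ∈ Submodule.span R ((fun j => coshPow (a j)) '' s) := by
  obtain ⟨l, hl, hlc⟩ := hc
  rw [← coshPow_abs, ← hlc]
  exact Submodule.subset_span ⟨l, hl, rfl⟩

theorem sinhPow_mem_span {a : ℕ → ℤ} {s : Set ℕ} {c : ℤ} (hc : c = 0 ∨ |c| ∈ a '' s) :
    (sinhPow c : Rˣ → R) ∈ Submodule.span R ((fun j => sinhPow (a j)) '' s) := by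
  rcases hc with rfl | ⟨l, hl, hlc⟩
  · convert Submodule.zero_mem _
    ext x
    simp [sinhPow]
  · have hmem : (sinhPow |c| : Rˣ → R) ∈ Submodule.span R ((fun j => sinhPow (a j)) '' s) :=
      Submodule.subset_span ⟨l, hl, congrArg sinhPow hlc⟩
    rcases abs_choice c with h | h
    · rwa [h] at hmem
    · convert Submodule.neg_mem _ hmem
      ext x
      simp [sinhPow, h]

/-- The determinant `det (v_i ^ b_j + v_i ^ (-b_j))`. -/
def cosAlternant (b : ℕ → ℤ) {n : ℕ} (v : Fin n → Rˣ) : R := alternant (fun j => coshPow (b j)) v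

/-- The determinant `det (v_i ^ b_j - v_i ^ (-b_j))`. -/
def sinAlternant (b : ℕ → ℤ) {n : ℕ} (v : Fin n → Rˣ) : R := alternant (fun j => sinhPow (b j)) v

section Reduction

variable {a b : ℕ → ℤ} {d : ℤ} {n : ℕ} (v : Fin n → Rˣ)

theorem cosAlternant_snoc_one (hab : ∀ j, a (j + 1) = b j + d)
    (hba : ∀ j, |b j - d| ∈ a '' Set.Iic j) :
    cosAlternant a (Fin.snoc v 1 : Fin (n + 1) → Rˣ) =
      (-1) ^ n * 2 * ((∏ i, sinhPow d (v i)) * sinAlternant b v) := by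
  have hspan (j : ℕ) : (sinhPow d * sinhPow (b j) - coshPow (a (j + 1)) : Rˣ → R) ∈
      Submodule.span R ((fun j => coshPow (a j)) '' Set.Iic j) := by
    rw [sinhPow_mul_sinhPow, hab, sub_sub_cancel_left]
    exact Submodule.neg_mem _ (coshPow_mem_span (hba j))
  rw [cosAlternant, alternant_snoc (w := sinhPow d) (by simp [sinhPow]) hspan, sinAlternant]
  norm_num [coshPow]

theorem sinAlternant_snoc (hab : ∀ j, a (j + 1) = b j + d)
    (hba : ∀ j, b j - d = 0 ∨ |b j - d| ∈ a '' Set.Iic j) {w : Rˣ} (hw : coshPow d w = 0) :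
    sinAlternant a (Fin.snoc v w : Fin (n + 1) → Rˣ) =
      (-1) ^ n * sinhPow (a 0) w * ((∏ i, coshPow d (v i)) * sinAlternant b v) := by
  refine alternant_snoc hw (fun j => ?_) v
  rw [coshPow_mul_sinhPow, hab, add_sub_cancel_left]
  exact sinhPow_mem_span (hba j)

theorem sinAlternant_eq_prod_mul (hab : ∀ j, a j = b j + d)
    (hba : ∀ j, b j - d = 0 ∨ |b j - d| ∈ a '' Set.Iio j) :
    sinAlternant a v = (∏ i, coshPow d (v i)) * sinAlternant b v := by
  rw [sinAlternant, sinAlternant, ← alternant_mul]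
  refine (alternant_eq_of_sub_mem_span (fun j => ?_) v).symm
  rw [coshPow_mul_sinhPow, hab, add_sub_cancel_left]
  exact sinhPow_mem_span (hba j)

end Reduction

/-- The odd positive integers `1, 3, 5, …`. -/
def oddExp (j : ℕ) : ℤ := 2 * j + 1

/-- The even positive integers `2, 4, 6, …`. -/
def evenExp (j : ℕ) : ℤ := 2 * j + 2

/-- The odd positive integers prime to `3`, namely `1, 5, 7, 11, …`. -/
def oddExpCoprimeThree (j : ℕ) : ℤ := 2 * (j + (j + 1) / 2) + 1

/-- The even positive integers prime to `3`, namely `2, 4, 8, 10, …`. -/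
def evenExpCoprimeThree (j : ℕ) : ℤ := 2 * (j + j / 2) + 2

section Instances

variable {n : ℕ} (v : Fin n → Rˣ)

theorem cosAlternant_oddExp_snoc_one :
    cosAlternant oddExp (Fin.snoc v 1 : Fin (n + 1) → Rˣ) =
      (-1) ^ n * 2 * ((∏ i, sinhPow 1 (v i)) * sinAlternant evenExp v) :=
  cosAlternant_snoc_one v (fun j => by simp only [oddExp, evenExp]; omega) fun j =>
    ⟨j, Set.mem_Iic.2 le_rfl, by simp only [oddExp, evenExp, Int.abs_eq_natAbs]; omega⟩

theorem cosAlternant_oddExpCoprimeThree_snoc_one :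
    cosAlternant oddExpCoprimeThree (Fin.snoc v 1 : Fin (n + 1) → Rˣ) =
      (-1) ^ n * 2 * ((∏ i, sinhPow 3 (v i)) * sinAlternant evenExpCoprimeThree v) :=
  cosAlternant_snoc_one v
    (fun j => by simp only [oddExpCoprimeThree, evenExpCoprimeThree]; omega) fun j =>
    ⟨j - 1, Set.mem_Iic.2 (j.sub_le 1), by
      simp only [oddExpCoprimeThree, evenExpCoprimeThree, Int.abs_eq_natAbs]; omega⟩

theorem cosAlternant_evenExpCoprimeThree_snoc_one :
    cosAlternant evenExpCoprimeThree (Fin.snoc v 1 : Fin (n + 1) → Rˣ) =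
      (-1) ^ n * 2 * ((∏ i, sinhPow 3 (v i)) * sinAlternant oddExpCoprimeThree v) :=
  cosAlternant_snoc_one v
    (fun j => by simp only [oddExpCoprimeThree, evenExpCoprimeThree]; omega) fun j =>
    ⟨j - 1, Set.mem_Iic.2 (j.sub_le 1), by
      simp only [oddExpCoprimeThree, evenExpCoprimeThree, Int.abs_eq_natAbs]; omega⟩

theorem prod_sinhPow_three :
    ∏ i, sinhPow 3 (v i) = (∏ i, sinhPow 1 (v i)) * ∏ i, (1 + coshPow 2 (v i)) := by
  simp only [sinhPow_three, Finset.prod_mul_distrib]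

theorem sinAlternant_evenExp :
    sinAlternant evenExp v = (∏ i, coshPow 1 (v i)) * sinAlternant oddExp v := by
  refine sinAlternant_eq_prod_mul v (fun j => by simp only [oddExp, evenExp]; omega) ?_
  rintro (_ | j)
  · exact Or.inl (by simp [oddExp])
  · exact Or.inr ⟨j, Set.mem_Iio.2 j.lt_succ_self, by
      simp only [oddExp, evenExp, Int.abs_eq_natAbs]; omega⟩

theorem sinAlternant_evenExp_snoc {w : Rˣ} (hw : coshPow 3 w = 0) :
    sinAlternant evenExp (Fin.snoc v w : Fin (n + 1) → Rˣ) =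
      (-1) ^ n * sinhPow 2 w * ((∏ i, coshPow 3 (v i)) * sinAlternant oddExp v) := by
  refine sinAlternant_snoc v (fun j => by simp only [oddExp, evenExp]; omega) ?_ hw
  rintro (_ | _ | j)
  · exact Or.inr ⟨0, Set.mem_Iic.2 le_rfl, by norm_num [oddExp, evenExp]⟩
  · exact Or.inl (by norm_num [oddExp])
  · exact Or.inr ⟨j, Set.mem_Iic.2 (j.le_add_right 2), by
      simp only [oddExp, evenExp, Int.abs_eq_natAbs]; omega⟩

theorem sinAlternant_evenExpCoprimeThree_snoc {w : Rˣ} (hw : coshPow 3 w = 0) :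
    sinAlternant evenExpCoprimeThree (Fin.snoc v w : Fin (n + 1) → Rˣ) =
      (-1) ^ n * sinhPow 2 w * ((∏ i, coshPow 3 (v i)) * sinAlternant oddExpCoprimeThree v) :=
  sinAlternant_snoc v (fun j => by simp only [oddExpCoprimeThree, evenExpCoprimeThree]; omega)
    (fun j => Or.inr ⟨j - 1, Set.mem_Iic.2 (j.sub_le 1), by
      simp only [oddExpCoprimeThree, evenExpCoprimeThree, Int.abs_eq_natAbs]; omega⟩) hw

end Instances

end CoshSinhPow

section Ratios

variable {F : Type*} [Field F]

theorem one_add_coshPow_two (x : Fˣ) : 1 + coshPow 2 x = 1 + (x : F) ^ 2 + ((x : F) ^ 2)⁻¹ := by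
  simp only [coshPow, Units.val_zpow_eq_zpow_val, zpow_neg, add_assoc]
  norm_cast

variable {n : ℕ} {v : Fin n → Fˣ}

theorem sinAlternant_evenExpCoprimeThree_snoc_div {w : Fˣ} (hw : coshPow 3 w = 0)
    (h : sinAlternant evenExp (Fin.snoc v w : Fin (n + 1) → Fˣ) ≠ 0) :
    sinAlternant evenExpCoprimeThree (Fin.snoc v w : Fin (n + 1) → Fˣ) /
        sinAlternant evenExp (Fin.snoc v w : Fin (n + 1) → Fˣ) =
      sinAlternant oddExpCoprimeThree v / sinAlternant oddExp v := by
  rw [sinAlternant_evenExp_snoc v hw, ← mul_assoc] at h ⊢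
  rw [sinAlternant_evenExpCoprimeThree_snoc v hw, ← mul_assoc,
    mul_div_mul_left _ _ (left_ne_zero_of_mul h)]

theorem sinAlternant_evenExpCoprimeThree_div_oddExp (h : sinAlternant evenExp v ≠ 0) :
    sinAlternant evenExpCoprimeThree v / sinAlternant oddExp v =
      (∏ i, coshPow 1 (v i)) * (sinAlternant evenExpCoprimeThree v / sinAlternant evenExp v) := by
  rw [sinAlternant_evenExp] at h ⊢
  have := left_ne_zero_of_mul h
  field_simp

theorem cosAlternant_oddExpCoprimeThree_snoc_one_div
    (h : cosAlternant oddExp (Fin.snoc v 1 : Fin (n + 1) → Fˣ) ≠ 0) :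
    cosAlternant oddExpCoprimeThree (Fin.snoc v 1 : Fin (n + 1) → Fˣ) /
        cosAlternant oddExp (Fin.snoc v 1 : Fin (n + 1) → Fˣ) =
      (∏ i, (1 + coshPow 2 (v i))) *
        (sinAlternant evenExpCoprimeThree v / sinAlternant evenExp v) := by
  rw [cosAlternant_oddExp_snoc_one, ← mul_assoc] at h ⊢
  rw [cosAlternant_oddExpCoprimeThree_snoc_one, prod_sinhPow_three, mul_assoc (∏ i, _), ← mul_assoc,
    mul_div_mul_left _ _ (left_ne_zero_of_mul h), mul_div_assoc]

theorem cosAlternant_evenExpCoprimeThree_snoc_one_div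
    (h : cosAlternant oddExp (Fin.snoc v 1 : Fin (n + 1) → Fˣ) ≠ 0) :
    cosAlternant evenExpCoprimeThree (Fin.snoc v 1 : Fin (n + 1) → Fˣ) /
        cosAlternant oddExp (Fin.snoc v 1 : Fin (n + 1) → Fˣ) * ∏ i, coshPow 1 (v i) =
      (∏ i, (1 + coshPow 2 (v i))) *
        (sinAlternant oddExpCoprimeThree v / sinAlternant oddExp v) := by
  rw [cosAlternant_oddExp_snoc_one, ← mul_assoc] at h ⊢
  rw [cosAlternant_evenExpCoprimeThree_snoc_one, prod_sinhPow_three, mul_assoc (∏ i, _),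
    ← mul_assoc, mul_div_mul_left _ _ (left_ne_zero_of_mul h)]
  rw [sinAlternant_evenExp] at h ⊢
  have hcosh := left_ne_zero_of_mul (right_ne_zero_of_mul h)
  field_simp

end Ratios

section Folding

variable {R : Type*} [CommRing R] {m : ℕ}

/-- The points `q₁⁻¹, …, q_m⁻¹, 1` and `q₁, …, q_m, p`, each list indexed by one summand. -/
def foldedPoints (q : Fin m → Rˣ) (p : Rˣ) : Fin (m + 1) ⊕ Fin (m + 1) → Rˣ :=
  Sum.elim (Fin.snoc q⁻¹ 1) (Fin.snoc q p)

theorem two_mul_det_foldedPoints_zpow {b : ℕ → ℤ} {a : Fin (m + 1) ⊕ Fin (m + 1) → ℤ}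
    (hinl : ∀ j, a (Sum.inl j) = -b j) (hinr : ∀ j, a (Sum.inr j) = b j)
    (q : Fin m → Rˣ) (p : Rˣ) :
    2 * (Matrix.of fun i j => (foldedPoints q p i ^ a j).val).det =
      cosAlternant b (Fin.snoc q 1 : Fin (m + 1) → Rˣ) *
        sinAlternant b (Fin.snoc q p : Fin (m + 1) → Rˣ) := by
  rw [← Matrix.fromBlocks_toBlocks (Matrix.of _),
    det_fromBlocks_of_add_mul_eq (E := Matrix.diagonal (Fin.snoc 1 0)), ← mul_assoc]
  · have hdet : (Matrix.diagonal (Fin.snoc 1 2 : Fin (m + 1) → R)).det = 2 := by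
      simp [Fin.prod_univ_castSucc]
    rw [← hdet, ← Matrix.det_mul, cosAlternant, alternant, sinAlternant, alternant]
    congr 2 <;> ext i j
    · refine Fin.lastCases ?_ (fun i => ?_) i <;>
        norm_num [foldedPoints, Matrix.toBlocks₁₁, Matrix.toBlocks₂₁, hinl, coshPow]
    · simp [foldedPoints, Matrix.toBlocks₂₁, Matrix.toBlocks₂₂, hinl, hinr, sinhPow]
  · ext i j
    refine Fin.lastCases ?_ (fun i => ?_) i <;>
      simp [foldedPoints, Matrix.toBlocks₁₁, Matrix.toBlocks₁₂, Matrix.toBlocks₂₁,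
        Matrix.toBlocks₂₂, hinl, hinr, add_comm]

theorem two_mul_det_foldedPoints_zpow_add {b : ℕ → ℤ} {s : ℤ}
    {a : Fin (m + 1) ⊕ Fin (m + 1) → ℤ} (hinl : ∀ j, a (Sum.inl j) = s - b j)
    (hinr : ∀ j, a (Sum.inr j) = s + b j) (q : Fin m → Rˣ) (p : Rˣ) :
    2 * (Matrix.of fun i j => (foldedPoints q p i ^ a j).val).det =
      (p ^ s : Rˣ) * (cosAlternant b (Fin.snoc q 1 : Fin (m + 1) → Rˣ) *
        sinAlternant b (Fin.snoc q p : Fin (m + 1) → Rˣ)) := by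
  have hprod : ∏ i, (foldedPoints q p i ^ s).val = (p ^ s : Rˣ) := by
    rw [← Units.coe_prod]
    simp [foldedPoints, Fin.prod_univ_castSucc, ← mul_assoc]
  rw [← two_mul_det_foldedPoints_zpow (a := fun j => a j - s) (by simp [hinl]) (by simp [hinr]),
    mul_left_comm, ← hprod, ← Matrix.det_mul_column]
  congr 2
  ext i j
  rw [Matrix.of_apply, Matrix.of_apply, Matrix.of_apply, ← Units.val_mul, ← zpow_add,
    add_sub_cancel]

end Folding

section Schur

/-- The positions in `dblInv z a b` of the coordinates `z₁⁻¹, …, z_m⁻¹, b`, followed by those of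
`z₁, …, z_m, a`. -/
def dblInvEquiv {m n : ℕ} (hn : n = 2 * (m + 1)) : Fin (m + 1) ⊕ Fin (m + 1) ≃ Fin n :=
  Equiv.ofBijective
    (Sum.elim (fun i => ⟨if (i : ℕ) < m then m + i else 2 * m + 1, by split_ifs <;> omega⟩)
      fun i => ⟨if (i : ℕ) < m then i else 2 * m, by split_ifs <;> omega⟩)
    ((Fintype.bijective_iff_injective_and_card _).2 ⟨by
      rintro (i | i) (j | j) hij <;>
        simp only [Sum.elim_inl, Sum.elim_inr, Sum.inl.injEq, Sum.inr.injEq,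
          reduceCtorEq, Fin.ext_iff] at hij ⊢ <;>
        split_ifs at hij <;> omega, by simp [hn, two_mul]⟩)

/-- The map `inl j ↦ m + 1 + j`, `inr j ↦ m - j`, which pairs the columns of a determinant of
order `n = 2m + 2` that are symmetric about its centre. -/
def centralEquiv {m n : ℕ} (hn : n = 2 * (m + 1)) : Fin (m + 1) ⊕ Fin (m + 1) ≃ Fin n :=
  (Equiv.sumComm _ _).trans <| (Fin.revPerm.sumCongr (Equiv.refl _)).trans <|
    finSumFinEquiv.trans <| finCongr (by omega)

variable {m n : ℕ} (hn : n = 2 * (m + 1))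

theorem val_centralEquiv_inl (j : Fin (m + 1)) :
    (centralEquiv hn (Sum.inl j) : ℕ) = m + 1 + j := by
  simp [centralEquiv, add_comm]

theorem val_centralEquiv_inr (j : Fin (m + 1)) :
    (centralEquiv hn (Sum.inr j) : ℕ) = m - j := by
  simp [centralEquiv]

theorem dblInv_sq_dblInvEquiv (q : Fin m → ℂˣ) (p : ℂˣ) (i : Fin (m + 1) ⊕ Fin (m + 1)) :
    (dblInv (fun i => (q i : ℂ) ^ 2) ((p : ℂ) ^ 2) 1 : Fin n → ℂ) (dblInvEquiv hn i) =
      (foldedPoints q p i : ℂ) ^ 2 := by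
  rcases i with i | i <;> refine Fin.lastCases ?_ (fun i => ?_) i <;>
    simp [dblInvEquiv, foldedPoints, dblInv, two_mul, add_assoc]

theorem schurNum_dblInv_sq {lam : Fin n → ℕ} {b : ℕ → ℤ} {d : ℤ}
    (hinl : ∀ j : Fin (m + 1), 2 * (lam (centralEquiv hn (Sum.inl j)) : ℤ) = d - b j + oddExp j)
    (hinr : ∀ j : Fin (m + 1), 2 * (lam (centralEquiv hn (Sum.inr j)) : ℤ) = d + b j - oddExp j)
    (q : Fin m → ℂˣ) (p : ℂˣ) :
    2 * (Equiv.Perm.sign ((centralEquiv hn).trans (dblInvEquiv hn).symm) : ℤ) *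
        schurNum lam (dblInv (fun i => (q i : ℂ) ^ 2) ((p : ℂ) ^ 2) 1) =
      (p : ℂ) ^ (d + (2 * m + 1)) * (cosAlternant b (Fin.snoc q 1 : Fin (m + 1) → ℂˣ) *
        sinAlternant b (Fin.snoc q p : Fin (m + 1) → ℂˣ)) := by
  rw [schurNum, mul_assoc, ← det_submatrix_equiv_equiv, ← Units.val_zpow_eq_zpow_val,
    ← two_mul_det_foldedPoints_zpow_add (a := fun j =>
      2 * ((lam (centralEquiv hn j) : ℤ) + n - 1 - (centralEquiv hn j : ℕ)))]
  · congr 2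
    ext i j
    simp [dblInv_sq_dblInvEquiv, zpow_mul]
  · intro j
    have hj := hinl j
    simp only [val_centralEquiv_inl, oddExp] at hj ⊢
    omega
  · intro j
    have hj := hinr j
    simp only [val_centralEquiv_inr, oddExp] at hj ⊢
    omega

theorem two_mul_sign_ne_zero {ι : Type*} [Fintype ι] [DecidableEq ι] (σ : Equiv.Perm ι) :
    2 * ((Equiv.Perm.sign σ : ℤ) : ℂ) ≠ 0 :=
  mul_ne_zero two_ne_zero (mod_cast Units.ne_zero _)

theorem schurDen_eq_schurNum (v : Fin n → ℂ) : schurDen v = schurNum 0 v := by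
  simp [schurDen, schurNum]

theorem schurDen_dblInv_sq (q : Fin m → ℂˣ) (p : ℂˣ) :
    2 * (Equiv.Perm.sign ((centralEquiv hn).trans (dblInvEquiv hn).symm) : ℤ) *
        schurDen (dblInv (fun i => (q i : ℂ) ^ 2) ((p : ℂ) ^ 2) 1 : Fin n → ℂ) =
      (p : ℂ) ^ (2 * m + 1 : ℤ) * (cosAlternant oddExp (Fin.snoc q 1 : Fin (m + 1) → ℂˣ) *
        sinAlternant oddExp (Fin.snoc q p : Fin (m + 1) → ℂˣ)) := by
  rw [schurDen_eq_schurNum, schurNum_dblInv_sq hn (b := oddExp) (d := 0) (by simp) (by simp),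
    zero_add]

theorem schurF_dblInv_sq {lam : Fin n → ℕ} {b : ℕ → ℤ} {d : ℤ}
    (hinl : ∀ j : Fin (m + 1), 2 * (lam (centralEquiv hn (Sum.inl j)) : ℤ) = d - b j + oddExp j)
    (hinr : ∀ j : Fin (m + 1), 2 * (lam (centralEquiv hn (Sum.inr j)) : ℤ) = d + b j - oddExp j)
    (q : Fin m → ℂˣ) (p : ℂˣ) :
    schurF lam (dblInv (fun i => (q i : ℂ) ^ 2) ((p : ℂ) ^ 2) 1) =
      (p : ℂ) ^ d *
        (cosAlternant b (Fin.snoc q 1 : Fin (m + 1) → ℂˣ) /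
          cosAlternant oddExp (Fin.snoc q 1 : Fin (m + 1) → ℂˣ)) *
        (sinAlternant b (Fin.snoc q p : Fin (m + 1) → ℂˣ) /
          sinAlternant oddExp (Fin.snoc q p : Fin (m + 1) → ℂˣ)) := by
  rw [schurF, ← mul_div_mul_left _ _ (two_mul_sign_ne_zero
      ((centralEquiv hn).trans (dblInvEquiv hn).symm)), schurNum_dblInv_sq hn hinl hinr,
    schurDen_dblInv_sq, mul_div_mul_comm, mul_div_mul_comm, ← mul_assoc, zpow_add₀ p.ne_zero,
    mul_div_cancel_right₀ _ (zpow_ne_zero _ p.ne_zero)]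

end Schur

section Symplectic

variable {n : ℕ}

theorem sinAlternant_eq_sign_mul_symplNum {lam : Fin n → ℕ} {b : ℕ → ℤ}
    (hb : ∀ j : Fin n, b j = 2 * (lam j.rev + j + 1)) (q : Fin n → ℂˣ) :
    sinAlternant b q =
      (Equiv.Perm.sign (Fin.revPerm (n := n)) : ℤ) * symplNum lam fun i => (q i : ℂ) ^ 2 := by
  rw [symplNum, ← Matrix.det_permute', sinAlternant, alternant]
  congr 1
  ext i j
  have hj : b j = 2 * ((lam j.rev : ℤ) + n - (j.rev : ℕ)) := by
    rw [hb, Fin.val_rev]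
    omega
  simp only [sinhPow, hj, ← mul_neg, zpow_mul, Units.val_zpow_eq_zpow_val, Matrix.of_apply,
    Matrix.submatrix_apply, id, Fin.revPerm_apply, zpow_ofNat]

theorem sinAlternant_evenExp_eq_sign_mul_symplDen (q : Fin n → ℂˣ) :
    sinAlternant evenExp q =
      (Equiv.Perm.sign (Fin.revPerm (n := n)) : ℤ) * symplDen fun i => (q i : ℂ) ^ 2 := by
  rw [sinAlternant_eq_sign_mul_symplNum (lam := 0) fun j => by
    simp only [evenExp, Pi.zero_apply, Nat.cast_zero]; ring]
  simp [symplNum, symplDen]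

theorem symplF_sq {lam : Fin n → ℕ} {b : ℕ → ℤ}
    (hb : ∀ j : Fin n, b j = 2 * (lam j.rev + j + 1)) (q : Fin n → ℂˣ) :
    symplF lam (fun i => (q i : ℂ) ^ 2) = sinAlternant b q / sinAlternant evenExp q := by
  rw [sinAlternant_eq_sign_mul_symplNum hb, sinAlternant_evenExp_eq_sign_mul_symplDen,
    mul_div_mul_left _ _ (mod_cast Units.ne_zero _), symplF]

theorem symplF_YkP_sq (q : Fin n → ℂˣ) :
    symplF (YkP n) (fun i => (q i : ℂ) ^ 2) =
      sinAlternant evenExpCoprimeThree q / sinAlternant evenExp q :=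
  symplF_sq (fun j => by simp only [evenExpCoprimeThree, YkP, Fin.val_rev]; omega) q

theorem sinAlternant_evenExp_ne_zero {q : Fin n → ℂˣ}
    (h : symplDen (fun i => (q i : ℂ) ^ 2) ≠ 0) : sinAlternant evenExp q ≠ 0 := by
  rw [sinAlternant_evenExp_eq_sign_mul_symplDen]
  exact mul_ne_zero (mod_cast Units.ne_zero _) h

end Symplectic

section DoubleStaircase

variable {m n : ℕ} (hn : n = 2 * (m + 1)) {q : Fin m → ℂˣ} {p w : ℂˣ}

include hn

theorem cosAlternant_oddExp_snoc_one_ne_zero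
    (h : schurDen (dblInv (fun i => (q i : ℂ) ^ 2) ((p : ℂ) ^ 2) 1 : Fin n → ℂ) ≠ 0) :
    cosAlternant oddExp (Fin.snoc q 1 : Fin (m + 1) → ℂˣ) ≠ 0 := by
  have hden := mul_ne_zero (two_mul_sign_ne_zero ((centralEquiv hn).trans (dblInvEquiv hn).symm)) h
  rw [schurDen_dblInv_sq hn] at hden
  exact left_ne_zero_of_mul (right_ne_zero_of_mul hden)

theorem schurF_YkP_dblInv_sq_of_even (hm : Even m) (hw : coshPow 3 w = (0 : ℂ))
    (hs : schurDen (dblInv (fun i => (q i : ℂ) ^ 2) ((p : ℂ) ^ 2) 1 : Fin n → ℂ) ≠ 0)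
    (hpw : symplDen (fun i => ((Fin.snoc (Fin.snoc q p : Fin (m + 1) → ℂˣ) w :
      Fin (m + 2) → ℂˣ) i : ℂ) ^ 2) ≠ 0) :
    schurF (YkP n) (dblInv (fun i => (q i : ℂ) ^ 2) ((p : ℂ) ^ 2) 1) =
      (p : ℂ) ^ m * (∏ i, (1 + coshPow 2 (q i))) *
        symplF (YkP (m + 2)) (fun i => ((Fin.snoc (Fin.snoc q p : Fin (m + 1) → ℂˣ) w :
          Fin (m + 2) → ℂˣ) i : ℂ) ^ 2) *
        symplF (YkP m) (fun i => (q i : ℂ) ^ 2) := by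
  obtain ⟨r, rfl⟩ := hm
  rw [symplF_YkP_sq, symplF_YkP_sq,
    sinAlternant_evenExpCoprimeThree_snoc_div hw (sinAlternant_evenExp_ne_zero hpw),
    schurF_dblInv_sq hn (b := oddExpCoprimeThree) (d := (r + r : ℕ)),
    cosAlternant_oddExpCoprimeThree_snoc_one_div (cosAlternant_oddExp_snoc_one_ne_zero hn hs),
    zpow_natCast]
  · ring
  all_goals
    intro j
    simp only [YkP, val_centralEquiv_inl, val_centralEquiv_inr, oddExp, oddExpCoprimeThree]
    omega

theorem schurF_YkP_dblInv_sq_of_odd (hm : Odd m) (hw : coshPow 3 w = (0 : ℂ))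
    (hs : schurDen (dblInv (fun i => (q i : ℂ) ^ 2) ((p : ℂ) ^ 2) 1 : Fin n → ℂ) ≠ 0)
    (hp : symplDen (fun i => ((Fin.snoc q p : Fin (m + 1) → ℂˣ) i : ℂ) ^ 2) ≠ 0)
    (hqw : symplDen (fun i => ((Fin.snoc q w : Fin (m + 1) → ℂˣ) i : ℂ) ^ 2) ≠ 0) :
    schurF (YkP n) (dblInv (fun i => (q i : ℂ) ^ 2) ((p : ℂ) ^ 2) 1) =
      (p : ℂ) ^ m * coshPow 1 p * (∏ i, (1 + coshPow 2 (q i))) *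
        symplF (YkP (m + 1)) (fun i => ((Fin.snoc q p : Fin (m + 1) → ℂˣ) i : ℂ) ^ 2) *
        symplF (YkP (m + 1)) (fun i => ((Fin.snoc q w : Fin (m + 1) → ℂˣ) i : ℂ) ^ 2) := by
  obtain ⟨r, rfl⟩ := hm
  rw [symplF_YkP_sq, symplF_YkP_sq,
    sinAlternant_evenExpCoprimeThree_snoc_div hw (sinAlternant_evenExp_ne_zero hqw),
    schurF_dblInv_sq hn (b := evenExpCoprimeThree) (d := (2 * r + 1 : ℕ)),
    sinAlternant_evenExpCoprimeThree_div_oddExp (sinAlternant_evenExp_ne_zero hp),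
    Fin.prod_univ_castSucc, zpow_natCast]
  · simp only [Fin.snoc_castSucc, Fin.snoc_last]
    linear_combination (p : ℂ) ^ (2 * r + 1) * coshPow 1 p *
      (sinAlternant evenExpCoprimeThree (Fin.snoc q p : Fin (2 * r + 1 + 1) → ℂˣ) /
        sinAlternant evenExp (Fin.snoc q p : Fin (2 * r + 1 + 1) → ℂˣ)) *
      cosAlternant_evenExpCoprimeThree_snoc_one_div (cosAlternant_oddExp_snoc_one_ne_zero hn hs)
  all_goals
    intro j
    simp only [YkP, val_centralEquiv_inl, val_centralEquiv_inr, oddExp, evenExpCoprimeThree]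
    omega

end DoubleStaircase

theorem exists_units_sq_eq {K : Type*} [Field K] [IsAlgClosed K] {x : K} (hx : x ≠ 0) :
    ∃ u : Kˣ, (u : K) ^ 2 = x := by
  obtain ⟨y, hy⟩ := IsAlgClosed.exists_pow_nat_eq x two_pos
  exact ⟨Units.mk0 y (by rintro rfl; simp_all), hy⟩

theorem coshPow_three_eq_zero {w : ℂˣ} (hw : (w : ℂ) ^ 2 = Complex.exp (Real.pi * Complex.I / 3)) :
    coshPow 3 w = (0 : ℂ) := by
  have hw6 : (w : ℂ) ^ 6 = -1 := by
    rw [show (6 : ℕ) = 2 * 3 by rfl, pow_mul, hw, ← Complex.exp_nat_mul, ← Complex.exp_pi_mul_I]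
    congr 1
    push_cast
    ring
  have hw0 := w.ne_zero
  simp only [coshPow, Units.val_zpow_eq_zpow_val]
  field_simp
  linear_combination hw6

theorem extL_singleton_sq {m : ℕ} (q : Fin m → ℂˣ) (p : ℂˣ) :
    (extL (fun i => (q i : ℂ) ^ 2) [(p : ℂ) ^ 2] : Fin (m + 1) → ℂ) =
      fun i => ((Fin.snoc q p : Fin (m + 1) → ℂˣ) i : ℂ) ^ 2 := by
  ext i
  refine Fin.lastCases ?_ (fun i => ?_) i <;> simp [extL]

theorem extL_pair_sq {m : ℕ} (q : Fin m → ℂˣ) (p w : ℂˣ) :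
    (extL (fun i => (q i : ℂ) ^ 2) [(p : ℂ) ^ 2, (w : ℂ) ^ 2] : Fin (m + 2) → ℂ) =
      fun i => ((Fin.snoc (Fin.snoc q p : Fin (m + 1) → ℂˣ) w : Fin (m + 2) → ℂˣ) i : ℂ) ^ 2 := by
  ext i
  refine Fin.lastCases ?_ (fun i => ?_) i
  · simp [extL]
  · refine Fin.lastCases ?_ (fun i => ?_) i <;> simp [extL]

theorem stmt7 (k : ℕ) :
    (∀ (z : Fin (2*k) → ℂ) (zz : ℂ), (∀ i, z i ≠ 0) → zz ≠ 0 →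
      schurDen (dblInv z zz 1 : Fin (4*k+2) → ℂ) ≠ 0 →
      symplDen (extL z [zz, Complex.exp ((Real.pi : ℂ) * Complex.I / 3)] : Fin (2*k+2) → ℂ) ≠ 0 →
      symplDen z ≠ 0 →
      schurF (YkP (4*k+2)) (dblInv z zz 1)
        = zz ^ k * (∏ i : Fin (2*k), (1 + z i + (z i)⁻¹))
          * symplF (YkP (2*k+2))
              (extL z [zz, Complex.exp ((Real.pi : ℂ) * Complex.I / 3)])
          * symplF (YkP (2*k)) z) ∧
    (∀ (z : Fin (2*k+1) → ℂ) (zz : ℂ), (∀ i, z i ≠ 0) → zz ≠ 0 →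
      schurDen (dblInv z zz 1 : Fin (4*k+4) → ℂ) ≠ 0 →
      symplDen (extL z [zz] : Fin (2*k+2) → ℂ) ≠ 0 →
      symplDen (extL z [Complex.exp ((Real.pi : ℂ) * Complex.I / 3)] : Fin (2*k+2) → ℂ) ≠ 0 →
      schurF (YkP (4*k+4)) (dblInv z zz 1)
        = zz ^ k * (1 + zz) * (∏ i : Fin (2*k+1), (1 + z i + (z i)⁻¹))
          * symplF (YkP (2*k+2)) (extL z [zz])
          * symplF (YkP (2*k+2))
              (extL z [Complex.exp ((Real.pi : ℂ) * Complex.I / 3)])) := by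
  obtain ⟨w, hw⟩ := exists_units_sq_eq (Complex.exp_ne_zero (Real.pi * Complex.I / 3))
  have hw3 := coshPow_three_eq_zero hw
  rw [← hw]
  refine ⟨fun z zz hz hzz hs hx _ => ?_, fun z zz hz hzz hs hx hy => ?_⟩
  all_goals
    choose q hq using fun i => exists_units_sq_eq (hz i)
    obtain ⟨p, rfl⟩ := exists_units_sq_eq hzz
    obtain rfl : z = fun i => (q i : ℂ) ^ 2 := funext fun i => (hq i).symm
    simp only [← one_add_coshPow_two]
  · rw [extL_pair_sq] at hx ⊢
    rw [schurF_YkP_dblInv_sq_of_even (by ring) (even_two_mul k) hw3 hs hx, pow_mul]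
  · rw [extL_singleton_sq] at hx hy
    rw [extL_singleton_sq, extL_singleton_sq,
      schurF_YkP_dblInv_sq_of_odd (by ring) (odd_two_mul_add_one k) hw3 hs hx hy,
      ← mul_coshPow_one]
    ring

end
end

section
/- With crossing parameter η = π/3 and any parameter λ, the vectors χ(x) and χ̄(x) satisfy, for all x: Ř(2x)·χ(x) = g(x)·r(2x)·χ(−x) and Ř(2x)·χ̄(x) = ḡ(x)·r(2x)·χ̄(−x). -/
noncomputable section

open Complex
open scoped BigOperators

/-! Expanding a product of two theta series of nomes `p ^ α` and `p ^ β` by Schröter's formula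
gives all the theta identities needed. The case `α = β = 1` yields three-term relations, valid for
every crossing parameter, which show that `Ř(2x)` maps `χ(x)` and `χ̄(x)` to explicit multiples of
`χ(-x)` and `χ̄(-x)`. It remains to factor `r(u)`. For `α = 2` and `β = 1`, one of the three
summands contains `ϑ₁(0) = 0`, and in the two others a shift of `z` by `±η` produces the factors
`exp (±iπ/3)`, which add up to `1`. Hence `f(z) = ϑ₄(2z,p²) ϑ₂(z,p)` satisfies
`f(z + η) + f(z - η) = f(z)`. At `z = 0` this evaluates `ϑ₄(2η,p²)`, and
`r(u) = ϑ₄(0,p²) ϑ₁(2η - u,p²) ϑ₄(2η - u,p²)` follows. -/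

section ThetaChar

open scoped Real

/-- The `n`-th term of the theta series with characteristic `a`. -/
def thetaCharTerm (a z τ : ℂ) (n : ℤ) : ℂ := exp (π * I * τ * (n + a) ^ 2 + 2 * (n + a) * I * z)

/-- The theta series with characteristic `a`, which treats the four Jacobi theta functions
uniformly: `ϑ₃` and `ϑ₂` have the characteristics `0` and `1/2`, and `ϑ₄`, `ϑ₁` arise from them by
the translation `z ↦ z - π / 2`. -/
def thetaChar (a z τ : ℂ) : ℂ := ∑' n : ℤ, thetaCharTerm a z τ n

lemma summable_thetaCharTerm (a z : ℂ) {τ : ℂ} (hτ : 0 < τ.im) :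
    Summable (thetaCharTerm a z τ) := by
  refine (((summable_jacobiTheta₂_term_iff ((z + π * τ * a) / π) τ).2 hτ).mul_left
    (exp (π * I * τ * a ^ 2 + 2 * a * I * z))).congr fun n => ?_
  have hpi : (π : ℂ) ≠ 0 := ofReal_ne_zero.2 Real.pi_ne_zero
  rw [jacobiTheta₂_term, thetaCharTerm, ← exp_add]
  congr 1
  field

lemma thetaChar_add_one (a z τ : ℂ) : thetaChar (a + 1) z τ = thetaChar a z τ := by
  rw [thetaChar, thetaChar, ← (Equiv.addRight (1 : ℤ)).tsum_eq (thetaCharTerm a z τ)]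
  refine tsum_congr fun n => ?_
  simp only [thetaCharTerm, Equiv.coe_addRight, Int.cast_add, Int.cast_one]
  ring_nf

lemma thetaChar_neg (a z τ : ℂ) : thetaChar a (-z) τ = thetaChar (-a) z τ := by
  rw [thetaChar, thetaChar, ← (Equiv.neg ℤ).tsum_eq]
  refine tsum_congr fun n => ?_
  simp only [thetaCharTerm, Equiv.neg_apply, Int.cast_neg]
  ring_nf

lemma thetaChar_add_pi (a z τ : ℂ) :
    thetaChar a (z + π) τ = exp (2 * π * I * a) * thetaChar a z τ := by
  rw [thetaChar, thetaChar, ← tsum_mul_left]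
  refine tsum_congr fun n => ?_
  rw [thetaCharTerm, thetaCharTerm, ← exp_add, ← one_mul (exp (2 * π * I * a + _)),
    ← exp_int_mul_two_pi_mul_I n, ← exp_add]
  ring_nf

lemma thetaChar_sub_pi (a z τ : ℂ) :
    thetaChar a (z - π) τ = exp (-(2 * π * I * a)) * thetaChar a z τ := by
  conv_rhs => rw [← sub_add_cancel z (π : ℂ), thetaChar_add_pi]
  rw [← mul_assoc, ← exp_add, neg_add_cancel, exp_zero, one_mul]

/-- The change of summation indices behind Schröter's formula: `m - n` is divided with remainder by
`α + β`, and `α * m + β * n` is then determined by one further free integer. -/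
def schroeterEquiv (α β : ℕ) [NeZero (α + β)] : Fin (α + β) × ℤ × ℤ ≃ ℤ × ℤ where
  toFun p := (p.2.1 + β * p.2.2 + p.1.val, p.2.1 - α * p.2.2)
  invFun q :=
    let r := Int.divModEquiv (α + β) (q.1 - q.2)
    (r.2, q.2 + α * r.1, r.1)
  left_inv := by
    rintro ⟨k, l, j⟩
    have h : l + β * j + k.val - (l - α * j) = (Int.divModEquiv (α + β)).symm (j, k) := by
      rw [Int.divModEquiv_symm_apply]
      push_cast
      ring
    simp only [h, Equiv.apply_symm_apply, sub_add_cancel]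
  right_inv := by
    rintro ⟨m, n⟩
    have h := (Int.divModEquiv (α + β)).symm_apply_apply (m - n)
    rw [Int.divModEquiv_symm_apply] at h
    push_cast at h
    simp only [Prod.mk.injEq, add_sub_cancel_right, and_true]
    linear_combination h

lemma thetaCharTerm_mul_thetaCharTerm (a b x y τ : ℂ) (α β : ℕ) [NeZero (α + β)]
    (k : Fin (α + β)) (l j : ℤ) :
    thetaCharTerm a x (α * τ) (schroeterEquiv α β (k, l, j)).1 *
        thetaCharTerm b y (β * τ) (schroeterEquiv α β (k, l, j)).2 =
      thetaCharTerm ((α * a + β * b + α * k.val) / (α + β)) (x + y) ((α + β) * τ) l *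
        thetaCharTerm ((a - b + k.val) / (α + β)) (β * x - α * y) (α * β * (α + β) * τ) j := by
  have h : (α + β : ℂ) ≠ 0 := mod_cast NeZero.ne (α + β)
  simp only [thetaCharTerm, schroeterEquiv, Equiv.coe_fn_mk, ← exp_add]
  congr 1
  push_cast
  field

lemma natCast_mul_im_pos {n : ℕ} {τ : ℂ} (hn : 0 < n) (hτ : 0 < τ.im) : 0 < (n * τ).im := by
  rw [← nsmul_eq_mul, smul_im]
  positivity

/-- **Schröter's formula**. -/
theorem thetaChar_mul_thetaChar (a b x y : ℂ) {τ : ℂ} (hτ : 0 < τ.im) {α β : ℕ} (hα : 0 < α)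
    (hβ : 0 < β) :
    thetaChar a x (α * τ) * thetaChar b y (β * τ) =
      ∑ k ∈ Finset.range (α + β),
        thetaChar ((α * a + β * b + α * k) / (α + β)) (x + y) ((α + β) * τ) *
          thetaChar ((a - b + k) / (α + β)) (β * x - α * y) (α * β * (α + β) * τ) := by
  have : NeZero (α + β) := ⟨by omega⟩
  have hα' (c z : ℂ) := (summable_thetaCharTerm c z (natCast_mul_im_pos hα hτ)).norm
  have hβ' (c z : ℂ) := (summable_thetaCharTerm c z (natCast_mul_im_pos hβ hτ)).norm
  have hs (c z : ℂ) := (summable_thetaCharTerm c z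
    (natCast_mul_im_pos (by omega : 0 < α + β) hτ)).norm
  have hp (c z : ℂ) := (summable_thetaCharTerm c z
    (natCast_mul_im_pos (by positivity : 0 < α * β * (α + β)) hτ)).norm
  push_cast at hs hp
  have hsum : Summable fun p : Fin (α + β) × ℤ × ℤ =>
      thetaCharTerm a x (α * τ) (schroeterEquiv α β p).1 *
        thetaCharTerm b y (β * τ) (schroeterEquiv α β p).2 :=
    (schroeterEquiv α β).summable_iff.2 (summable_mul_of_summable_norm (hα' a x) (hβ' b y))
  rw [thetaChar, thetaChar, tsum_mul_tsum_of_summable_norm (hα' a x) (hβ' b y),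
    ← (schroeterEquiv α β).tsum_eq, hsum.tsum_prod, tsum_fintype, Finset.sum_range]
  refine Finset.sum_congr rfl fun k _ => ?_
  rw [thetaChar, thetaChar, tsum_mul_tsum_of_summable_norm (hs _ _) (hp _ _)]
  exact tsum_congr fun p => thetaCharTerm_mul_thetaCharTerm a b x y τ α β k p.1 p.2

lemma thetaChar_mul_thetaChar_same (a b x y : ℂ) {τ : ℂ} (hτ : 0 < τ.im) :
    thetaChar a x τ * thetaChar b y τ =
      thetaChar ((a + b) / 2) (x + y) (2 * τ) * thetaChar ((a - b) / 2) (x - y) (2 * τ) +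
        thetaChar ((a + b + 1) / 2) (x + y) (2 * τ) *
          thetaChar ((a - b + 1) / 2) (x - y) (2 * τ) := by
  have h := thetaChar_mul_thetaChar a b x y hτ one_pos one_pos
  rw [Finset.sum_range_succ, Finset.sum_range_one] at h
  simpa [one_add_one_eq_two] using h

end ThetaChar

section Jacobi

open scoped Real

lemma th2_eq_thetaChar (z τ : ℂ) : th2 z τ = thetaChar (1 / 2) z τ := by
  refine tsum_congr fun n => ?_
  rw [thetaCharTerm]
  ring_nf

lemma th3_eq_thetaChar (z τ : ℂ) : th3 z τ = thetaChar 0 z τ := by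
  simp only [th3, thetaChar, thetaCharTerm, add_zero]

lemma th1_eq_th2 (z τ : ℂ) : th1 z τ = th2 (z - π / 2) τ := by
  rw [th1, th2, ← tsum_mul_left]
  refine tsum_congr fun n => ?_
  rw [← exp_neg_pi_div_two_mul_I, ← exp_neg_pi_mul_I, ← exp_int_mul, ← exp_add, ← exp_add]
  ring_nf

lemma th4_eq_th3 (z τ : ℂ) : th4 z τ = th3 (z - π / 2) τ := by
  refine tsum_congr fun n => ?_
  rw [← exp_neg_pi_mul_I, ← exp_int_mul, ← exp_add]
  ring_nf

lemma th2_neg (z τ : ℂ) : th2 (-z) τ = th2 z τ := by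
  rw [th2_eq_thetaChar, th2_eq_thetaChar, thetaChar_neg, ← thetaChar_add_one]
  norm_num

lemma th3_neg (z τ : ℂ) : th3 (-z) τ = th3 z τ := by
  rw [th3_eq_thetaChar, th3_eq_thetaChar, thetaChar_neg, neg_zero]

lemma th2_sub_pi (z τ : ℂ) : th2 (z - π) τ = -th2 z τ := by
  rw [th2_eq_thetaChar, th2_eq_thetaChar, thetaChar_sub_pi,
    show -(2 * π * I * (1 / 2)) = -(π * I) by ring, exp_neg_pi_mul_I, neg_one_mul]

lemma th3_sub_pi (z τ : ℂ) : th3 (z - π) τ = th3 z τ := by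
  rw [th3_eq_thetaChar, th3_eq_thetaChar, thetaChar_sub_pi, mul_zero, neg_zero, exp_zero, one_mul]

lemma th1_neg (z τ : ℂ) : th1 (-z) τ = -th1 z τ := by
  rw [th1_eq_th2, th1_eq_th2, ← th2_neg, show -(-z - π / 2 : ℂ) = z + π / 2 by ring,
    show (z - π / 2 : ℂ) = z + π / 2 - π by ring, th2_sub_pi, neg_neg]

lemma th4_neg (z τ : ℂ) : th4 (-z) τ = th4 z τ := by
  rw [th4_eq_th3, th4_eq_th3, ← th3_neg, ← th3_sub_pi]
  ring_nf

lemma th1_zero (τ : ℂ) : th1 0 τ = 0 := by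
  simpa [self_eq_neg] using th1_neg 0 τ

lemma th1_pi_sub (z τ : ℂ) : th1 (π - z) τ = th1 z τ := by
  rw [th1_eq_th2, th1_eq_th2, ← th2_neg]
  ring_nf

variable {τ : ℂ}

lemma th2_mul_th2 (x y : ℂ) (hτ : 0 < τ.im) :
    th2 x τ * th2 y τ =
      th2 (x + y) (2 * τ) * th3 (x - y) (2 * τ) + th3 (x + y) (2 * τ) * th2 (x - y) (2 * τ) := by
  have h := thetaChar_mul_thetaChar_same (1 / 2) (1 / 2) x y hτ
  rw [sub_self, zero_div, zero_add, add_halves, show (1 + 1 : ℂ) / 2 = 0 + 1 by norm_num,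
    thetaChar_add_one] at h
  simpa only [th2_eq_thetaChar, th3_eq_thetaChar] using h

lemma th3_mul_th3 (x y : ℂ) (hτ : 0 < τ.im) :
    th3 x τ * th3 y τ =
      th3 (x + y) (2 * τ) * th3 (x - y) (2 * τ) + th2 (x + y) (2 * τ) * th2 (x - y) (2 * τ) := by
  simpa [th2_eq_thetaChar, th3_eq_thetaChar] using thetaChar_mul_thetaChar_same 0 0 x y hτ

lemma th1_mul_th2 (x y : ℂ) (hτ : 0 < τ.im) :
    th1 x τ * th2 y τ =
      th1 (x + y) (2 * τ) * th4 (x - y) (2 * τ) + th4 (x + y) (2 * τ) * th1 (x - y) (2 * τ) := by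
  rw [th1_eq_th2, th2_mul_th2 _ _ hτ]
  simp only [th1_eq_th2, th4_eq_th3, sub_add_eq_add_sub, sub_right_comm]

lemma th1_add_mul_th1_sub (x y : ℂ) (hτ : 0 < τ.im) :
    th1 (x + y) τ * th1 (x - y) τ =
      th3 (2 * x) (2 * τ) * th2 (2 * y) (2 * τ) - th2 (2 * x) (2 * τ) * th3 (2 * y) (2 * τ) := by
  rw [th1_eq_th2, th1_eq_th2, th2_mul_th2 _ _ hτ,
    show x + y - π / 2 + (x - y - π / 2) = 2 * x - π by ring,
    show x + y - π / 2 - (x - y - π / 2) = 2 * y by ring, th2_sub_pi, th3_sub_pi]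
  ring

lemma th4_add_mul_th4_sub (x y : ℂ) (hτ : 0 < τ.im) :
    th4 (x + y) τ * th4 (x - y) τ =
      th3 (2 * x) (2 * τ) * th3 (2 * y) (2 * τ) - th2 (2 * x) (2 * τ) * th2 (2 * y) (2 * τ) := by
  rw [th4_eq_th3, th4_eq_th3, th3_mul_th3 _ _ hτ,
    show x + y - π / 2 + (x - y - π / 2) = 2 * x - π by ring,
    show x + y - π / 2 - (x - y - π / 2) = 2 * y by ring, th2_sub_pi, th3_sub_pi]
  ring

lemma th4_th1_add_formula (u v w : ℂ) (hτ : 0 < τ.im) :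
    th4 u τ * th4 (u - v - w) τ * (th1 v τ * th1 w τ) +
        th1 u τ * th1 (u - v - w) τ * (th4 v τ * th4 w τ) =
      th4 0 τ * th4 (v + w) τ * (th1 (v - u) τ * th1 (w - u) τ) := by
  obtain ⟨a, b, c, rfl, rfl, rfl⟩ : ∃ a b c, u = a + b ∧ v = b + c ∧ w = b - c :=
    ⟨u - (v + w) / 2, (v + w) / 2, (v - w) / 2, by ring, by ring, by ring⟩
  rw [show a + b - (b + c) - (b - c) = a - b by ring, show b + c + (b - c) = b + b by ring,
    show b + c - (a + b) = -(a - c) by ring, show b - c - (a + b) = -(a + c) by ring, th1_neg,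
    th1_neg, neg_mul_neg, ← sub_self b, mul_comm (th4 (b - b) τ), mul_comm (th1 (a - c) τ)]
  simp only [th1_add_mul_th1_sub _ _ hτ, th4_add_mul_th4_sub _ _ hτ]
  ring

lemma th1_th1_add_formula (u v w : ℂ) (hτ : 0 < τ.im) :
    th1 u τ * th1 (u - v - w) τ * (th1 v τ * th1 w τ) +
        th4 u τ * th4 (u - v - w) τ * (th4 v τ * th4 w τ) =
      th4 0 τ * th4 (v + w) τ * (th4 (v - u) τ * th4 (w - u) τ) := by
  obtain ⟨a, b, c, rfl, rfl, rfl⟩ : ∃ a b c, u = a + b ∧ v = b + c ∧ w = b - c :=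
    ⟨u - (v + w) / 2, (v + w) / 2, (v - w) / 2, by ring, by ring, by ring⟩
  rw [show a + b - (b + c) - (b - c) = a - b by ring, show b + c + (b - c) = b + b by ring,
    show b + c - (a + b) = -(a - c) by ring, show b - c - (a + b) = -(a + c) by ring, th4_neg,
    th4_neg, ← sub_self b, mul_comm (th4 (b - b) τ), mul_comm (th4 (a - c) τ)]
  simp only [th1_add_mul_th1_sub _ _ hτ, th4_add_mul_th4_sub _ _ hτ]
  ring

lemma th4_two_mul_mul_th2 (z : ℂ) (hτ : 0 < τ.im) :
    th4 (2 * z) (2 * τ) * th2 z τ =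
      thetaChar (1 / 6) (3 * z - π / 2) (3 * τ) * thetaChar (-1 / 6) (-(π / 2)) (6 * τ) +
        thetaChar (-1 / 6) (3 * z - π / 2) (3 * τ) * thetaChar (1 / 6) (-(π / 2)) (6 * τ) := by
  have hzero : thetaChar (1 / 2) (-(π / 2)) (6 * τ) = 0 := by
    rw [← th2_eq_thetaChar, ← zero_sub, ← th1_eq_th2, th1_zero]
  have hsum : thetaChar 0 (2 * z - π / 2) (2 * τ) * thetaChar (1 / 2) z τ =
      thetaChar (1 / 6) (3 * z - π / 2) (3 * τ) * thetaChar (-1 / 6) (-(π / 2)) (6 * τ) +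
        thetaChar (-1 / 6 + 1) (3 * z - π / 2) (3 * τ) * thetaChar (1 / 6) (-(π / 2)) (6 * τ) +
        thetaChar (3 / 2) (3 * z - π / 2) (3 * τ) * thetaChar (1 / 2) (-(π / 2)) (6 * τ) := by
    have h := thetaChar_mul_thetaChar 0 (1 / 2) (2 * z - π / 2) z hτ (α := 2) (β := 1)
      two_pos one_pos
    rw [Finset.sum_range_succ, Finset.sum_range_succ, Finset.sum_range_one] at h
    convert h using 1
    · norm_num
    · norm_num
      ring_nf
  rw [th4_eq_th3, th3_eq_thetaChar, th2_eq_thetaChar, hsum, hzero, mul_zero, add_zero,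
    thetaChar_add_one]

lemma th4_two_mul_mul_th2_trisection (z : ℂ) (hτ : 0 < τ.im) :
    th4 (2 * (z + ηc)) (2 * τ) * th2 (z + ηc) τ + th4 (2 * (z - ηc)) (2 * τ) * th2 (z - ηc) τ =
      th4 (2 * z) (2 * τ) * th2 z τ := by
  have hadd : 3 * (z + ηc) - π / 2 = 3 * z - π / 2 + π := by rw [ηc]; ring
  have hsub : 3 * (z - ηc) - π / 2 = 3 * z - π / 2 - π := by rw [ηc]; ring
  have hexp : exp (2 * π * I * (1 / 6)) + exp (-(2 * π * I * (1 / 6))) = 1 := by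
    rw [show 2 * π * I * (1 / 6) = (π / 3 : ℝ) * I by push_cast; ring, ← neg_mul, ← two_cos,
      ← ofReal_cos, Real.cos_pi_div_three]
    norm_num
  have hneg : 2 * π * I * (-1 / 6) = -(2 * π * I * (1 / 6)) := by ring
  simp only [th4_two_mul_mul_th2 _ hτ, hadd, hsub, thetaChar_add_pi, thetaChar_sub_pi, hneg,
    neg_neg]
  linear_combination
    (thetaChar (1 / 6) (3 * z - π / 2) (3 * τ) * thetaChar (-1 / 6) (-(π / 2)) (6 * τ) +
      thetaChar (-1 / 6) (3 * z - π / 2) (3 * τ) * thetaChar (1 / 6) (-(π / 2)) (6 * τ)) * hexp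

end Jacobi

section EightVertex

variable {τ : ℂ}

lemma two_mul_th4_mul_th2_eta (hτ : 0 < τ.im) :
    2 * (th4 (2 * ηc) (2 * τ) * th2 ηc τ) = th4 0 (2 * τ) * th2 0 τ := by
  have h := th4_two_mul_mul_th2_trisection 0 hτ
  rw [zero_add, zero_sub, mul_neg, th4_neg, th2_neg, mul_zero, ← two_mul] at h
  exact h

lemma rv_eq (u : ℂ) (hτ : 0 < τ.im) :
    rv τ u = th4 0 (2 * τ) * th1 (2 * ηc - u) (2 * τ) * th4 (2 * ηc - u) (2 * τ) := by
  have hη := th1_mul_th2 (u + ηc) ηc hτ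
  have hzero := th1_mul_th2 (2 * ηc - u) 0 hτ
  have hrefl : th1 (2 * ηc - u) τ = th1 (u + ηc) τ := by
    rw [← th1_pi_sub, ηc]
    ring_nf
  rw [add_assoc, ← two_mul, add_sub_cancel_right] at hη
  rw [add_zero, sub_zero, hrefl] at hzero
  rw [rv, av, bv]
  linear_combination -th4 (2 * ηc) (2 * τ) * hη + th4 0 (2 * τ) / 2 * hzero
    + th1 (u + ηc) τ / 2 * two_mul_th4_mul_th2_eta hτ

lemma cv_mul_add_bv_mul {u y z : ℂ} (hτ : 0 < τ.im) (hu : y + z + 2 * ηc = u) :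
    cv τ u * (th1 y (2 * τ) * th4 z (2 * τ)) + bv τ u * (th1 z (2 * τ) * th4 y (2 * τ)) =
      th4 0 (2 * τ) * th4 (u + 2 * ηc) (2 * τ) * th1 (2 * ηc - u) (2 * τ) *
        (th1 (y - u) (2 * τ) * th4 (z - u) (2 * τ)) := by
  have h := th4_th1_add_formula (τ := 2 * τ) u (2 * ηc) y (by simpa using hτ)
  rw [show u - 2 * ηc - y = z by linear_combination -hu,
    show 2 * ηc + y = -(z - u) by linear_combination hu, th4_neg] at h
  rw [cv, bv]
  linear_combination th4 (u + 2 * ηc) (2 * τ) * h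

lemma av_mul_th1_add_dv_mul_th4 {u y z : ℂ} (hτ : 0 < τ.im) (hu : y + z + 2 * ηc = u) :
    av τ u * (th1 y (2 * τ) * th1 z (2 * τ)) + dv τ u * (th4 z (2 * τ) * th4 y (2 * τ)) =
      th4 0 (2 * τ) * th1 (u + 2 * ηc) (2 * τ) * th4 (2 * ηc - u) (2 * τ) *
        (th1 (y - u) (2 * τ) * th1 (z - u) (2 * τ)) := by
  have h := th4_th1_add_formula (τ := 2 * τ) u y z (by simpa using hτ)
  rw [show u - y - z = 2 * ηc by linear_combination -hu,
    show y + z = -(2 * ηc - u) by linear_combination hu, th4_neg] at h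
  rw [av, dv]
  linear_combination th1 (u + 2 * ηc) (2 * τ) * h

lemma av_mul_th4_add_dv_mul_th1 {u y z : ℂ} (hτ : 0 < τ.im) (hu : y + z + 2 * ηc = u) :
    av τ u * (th4 z (2 * τ) * th4 y (2 * τ)) + dv τ u * (th1 y (2 * τ) * th1 z (2 * τ)) =
      th4 0 (2 * τ) * th1 (u + 2 * ηc) (2 * τ) * th4 (2 * ηc - u) (2 * τ) *
        (th4 (z - u) (2 * τ) * th4 (y - u) (2 * τ)) := by
  have h := th1_th1_add_formula (τ := 2 * τ) u y z (by simpa using hτ)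
  rw [show u - y - z = 2 * ηc by linear_combination -hu,
    show y + z = -(2 * ηc - u) by linear_combination hu, th4_neg] at h
  rw [av, dv]
  linear_combination th1 (u + 2 * ηc) (2 * τ) * h

lemma Rcheckent_mulVec (τ u : ℂ) (v : Fin 2 × Fin 2 → ℂ) :
    (Matrix.of (Rcheckent τ u)).mulVec v = fun p =>
      if p.1 = p.2 then av τ u * v p + dv τ u * v (flipS p.1, flipS p.2)
      else cv τ u * v p + bv τ u * v (flipS p.1, flipS p.2) := by
  ext ⟨i, j⟩
  fin_cases i <;> fin_cases j <;>
    simp [Matrix.mulVec, dotProduct, Fintype.sum_prod_type, Rcheckent, Rent, flipS, add_comm]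

lemma Rcheckent_mulVec_chiV (lam x : ℂ) (hτ : 0 < τ.im) :
    (Matrix.of (Rcheckent τ (2 * x))).mulVec (chiV τ lam x) =
      (th4 0 (2 * τ) * th4 (2 * (ηc + x)) (2 * τ) * th1 (2 * (ηc - x)) (2 * τ)) •
        chiV τ lam (-x) := by
  have h01 := cv_mul_add_bv_mul hτ (by ring : x + lam + (x - lam - 2 * ηc) + 2 * ηc = 2 * x)
  have h10 := cv_mul_add_bv_mul hτ (by ring : x - lam - 2 * ηc + (x + lam) + 2 * ηc = 2 * x)
  rw [show x + lam - 2 * x = -x + lam by ring,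
    show x - lam - 2 * ηc - 2 * x = -x - lam - 2 * ηc by ring] at h01 h10
  rw [Rcheckent_mulVec, mul_add, mul_sub, add_comm (2 * ηc)]
  ext ⟨i, j⟩
  fin_cases i <;> fin_cases j <;> simp [chiV, flipS, h01, h10]

lemma Rcheckent_mulVec_chibarV (lam x : ℂ) (hτ : 0 < τ.im) :
    (Matrix.of (Rcheckent τ (2 * x))).mulVec (chibarV τ lam x) =
      (th4 0 (2 * τ) * th1 (2 * (ηc + x)) (2 * τ) * th4 (2 * (ηc - x)) (2 * τ)) •
        chibarV τ lam (-x) := by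
  have hu : x + lam + (x - lam - 2 * ηc) + 2 * ηc = 2 * x := by ring
  have h00 := av_mul_th1_add_dv_mul_th4 hτ hu
  have h11 := av_mul_th4_add_dv_mul_th1 hτ hu
  rw [show x + lam - 2 * x = -x + lam by ring,
    show x - lam - 2 * ηc - 2 * x = -x - lam - 2 * ηc by ring] at h00 h11
  rw [Rcheckent_mulVec, mul_add, mul_sub, add_comm (2 * ηc)]
  ext ⟨i, j⟩
  fin_cases i <;> fin_cases j <;> simp [chibarV, flipS, h00, h11]

end EightVertex

theorem stmt8 (τ : ℂ) (hτ : 0 < τ.im) (lam x : ℂ)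
    (hg : th4 (2*(ηc - x)) (2*τ) ≠ 0) (hgb : th1 (2*(ηc - x)) (2*τ) ≠ 0) :
    (Matrix.of (Rcheckent τ (2*x))).mulVec (chiV τ lam x)
        = (th4 (2*(ηc + x)) (2*τ) / th4 (2*(ηc - x)) (2*τ) * rv τ (2*x)) • chiV τ lam (-x) ∧
    (Matrix.of (Rcheckent τ (2*x))).mulVec (chibarV τ lam x)
        = (th1 (2*(ηc + x)) (2*τ) / th1 (2*(ηc - x)) (2*τ) * rv τ (2*x)) • chibarV τ lam (-x) := by
  rw [Rcheckent_mulVec_chiV lam x hτ, Rcheckent_mulVec_chibarV lam x hτ, rv_eq _ hτ, ← mul_sub]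
  constructor
  · congr 1
    field
  · congr 1
    field

end
end
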